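/- arXiv:math/0305124 — 3 statements merged into one kernel-verified Lean document; each statement's English description precedes it below -/
import Mathlib

section
/- Let β be an alternating 2-form on ℝ⁷ satisfying Σ_{j,k=1}^{7} ε_{ijk} β(e_j,e_k) = 0 for every i ∈ {1,…,7}. Then |β∧β∧β|² ≤ (2/3)|β|⁶, where |β|² := Σ_{a<b} β(e_a,e_b)² and |β∧β∧β|² := Σ_{a₁<⋯<a₆} (β∧β∧β)(e_{a₁},…,e_{a₆})². -/
open scoped BigOperators Matrix

noncomputable section

namespace G2

/-- The standard basis vector `e i` of `ℝ⁷`. -/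
def e (i : Fin 7) : Fin 7 → ℝ := fun j => if j = i then 1 else 0

/-- The 3-form `e^a ∧ e^b ∧ e^c` (determinant convention), evaluated on `(x, y, z)`. -/
def w3 (a b c : Fin 7) (x y z : Fin 7 → ℝ) : ℝ :=
  x a * (y b * z c - y c * z b) - x b * (y a * z c - y c * z a)
    + x c * (y a * z b - y b * z a)

/-- The 4-form `e^a ∧ e^b ∧ e^c ∧ e^d`, evaluated on `(x, y, z, w)`. -/
def w4 (a b c d : Fin 7) (x y z w : Fin 7 → ℝ) : ℝ :=
  Matrix.det !![x a, x b, x c, x d; y a, y b, y c, y d;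
                z a, z b, z c, z d; w a, w b, w c, w d]

/-- The fundamental `G₂` 3-form
`φ = e^{123}+e^{145}+e^{167}+e^{246}-e^{257}-e^{347}-e^{356}` (indices shifted to start at 0),
as a trilinear alternating function of three vectors. -/
def phi (x y z : Fin 7 → ℝ) : ℝ :=
  w3 0 1 2 x y z + w3 0 3 4 x y z + w3 0 5 6 x y z + w3 1 3 5 x y z
    - w3 1 4 6 x y z - w3 2 3 6 x y z - w3 2 4 5 x y z

/-- The 4-form `ψ = *φ = e^{4567}+e^{2367}+e^{2345}+e^{1357}-e^{1346}-e^{1256}-e^{1247}`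
(indices shifted to start at 0), as a function of four vectors. -/
def psi (x y z w : Fin 7 → ℝ) : ℝ :=
  w4 3 4 5 6 x y z w + w4 1 2 5 6 x y z w + w4 1 2 3 4 x y z w + w4 0 2 4 6 x y z w
    - w4 0 2 3 5 x y z w - w4 0 1 4 5 x y z w - w4 0 1 3 6 x y z w

/-- `ε_{ijk} = φ(e_i, e_j, e_k)`. -/
def eps (i j k : Fin 7) : ℝ := phi (e i) (e j) (e k)

/-- `ε_{ijkl} = ψ(e_i, e_j, e_k, e_l)`. -/
def eps4 (i j k l : Fin 7) : ℝ := psi (e i) (e j) (e k) (e l)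

/-- The volume form `e^1 ∧ ⋯ ∧ e^7`, evaluated on a 7-tuple of vectors. -/
def vol (v : Fin 7 → (Fin 7 → ℝ)) : ℝ := Matrix.det (Matrix.of fun i j => v i j)

/-- The matrix `[v]` with `[v]_{ij} = Σ_k ε_{ijk} v_k`. -/
def bracket (v : Fin 7 → ℝ) : Matrix (Fin 7) (Fin 7) ℝ :=
  Matrix.of fun i j => ∑ k : Fin 7, eps i j k * v k

/-- The vector `⟨A⟩` with `⟨A⟩_i = Σ_{j,k} ε_{ijk} A_{jk}`. -/
def angle (A : Matrix (Fin 7) (Fin 7) ℝ) : Fin 7 → ℝ :=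
  fun i => ∑ j : Fin 7, ∑ k : Fin 7, eps i j k * A j k

/-- Wedge product of two 2-forms (determinant convention), evaluated on four vectors. -/
def wedge22 (A B : (Fin 7 → ℝ) → (Fin 7 → ℝ) → ℝ) (v : Fin 4 → (Fin 7 → ℝ)) : ℝ :=
  (1 / 4 : ℝ) * ∑ σ : Equiv.Perm (Fin 4),
    ((Equiv.Perm.sign σ : ℤ) : ℝ) * (A (v (σ 0)) (v (σ 1)) * B (v (σ 2)) (v (σ 3)))

/-- Wedge product of three 2-forms (determinant convention), evaluated on six vectors. -/
def wedge222 (A B C : (Fin 7 → ℝ) → (Fin 7 → ℝ) → ℝ) (v : Fin 6 → (Fin 7 → ℝ)) : ℝ :=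
  (1 / 8 : ℝ) * ∑ σ : Equiv.Perm (Fin 6),
    ((Equiv.Perm.sign σ : ℤ) : ℝ) *
      (A (v (σ 0)) (v (σ 1)) * B (v (σ 2)) (v (σ 3)) * C (v (σ 4)) (v (σ 5)))

/-- Wedge product of two 2-forms and a 3-form (determinant convention),
evaluated on seven vectors. -/
def wedge223 (A B : (Fin 7 → ℝ) → (Fin 7 → ℝ) → ℝ)
    (C : (Fin 7 → ℝ) → (Fin 7 → ℝ) → (Fin 7 → ℝ) → ℝ)
    (v : Fin 7 → (Fin 7 → ℝ)) : ℝ :=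
  (1 / 24 : ℝ) * ∑ σ : Equiv.Perm (Fin 7),
    ((Equiv.Perm.sign σ : ℤ) : ℝ) *
      (A (v (σ 0)) (v (σ 1)) * B (v (σ 2)) (v (σ 3)) * C (v (σ 4)) (v (σ 5)) (v (σ 6)))

/-- The map `i_φ : S²(ℝ⁷)* → Λ³(ℝ⁷)*`,
`i_φ(h) = Σ_{i,j,k,l} ε_{ikl} h_{ij} e^j ∧ e^k ∧ e^l`, evaluated on `(x, y, z)`. -/
def iphi (h : Fin 7 → Fin 7 → ℝ) (x y z : Fin 7 → ℝ) : ℝ :=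
  ∑ i : Fin 7, ∑ j : Fin 7, ∑ k : Fin 7, ∑ l : Fin 7, eps i k l * h i j * w3 j k l x y z


/-- Generic element of `Λ²₁₄` as a matrix. -/
def Bm (b01 b02 b03 b04 b05 b06 b12 b13 b14 b15 b16 b34 b35 b36 : ℝ) : Matrix (Fin 7) (Fin 7) ℝ :=
  !![0, b01, b02, b03, b04, b05, b06;
    -b01, 0, b12, b13, b14, b15, b16;
    -b02, -b12, 0, (b05-b14), (b13-b06), (-b03-b16), (b04+b15);
    -b03, -b13, -(b05-b14), 0, b34, b35, b36;
    -b04, -b14, -(b13-b06), -b34, 0, (b01-b36), (b35-b02);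
    -b05, -b15, -(-b03-b16), -b35, -(b01-b36), 0, (-b12-b34);
    -b06, -b16, -(b04+b15), -b36, -(b35-b02), -(-b12-b34), 0]

/-- The signed sub-Pfaffians. -/
def pv (b01 b02 b03 b04 b05 b06 b12 b13 b14 b15 b16 b34 b35 b36 : ℝ) : Fin 7 → ℝ :=
  ![(b12*(b34*(-b12-b34) - b35*(b35-b02) + b36*(b01-b36)) - b13*((b13-b06)*(-b12-b34) - (-b03-b16)*(b35-b02) + (b04+b15)*(b01-b36)) + b14*((b05-b14)*(-b12-b34) - (-b03-b16)*b36 + (b04+b15)*b35) - b15*((b05-b14)*(b35-b02) - (b13-b06)*b36 + (b04+b15)*b34) + b16*((b05-b14)*(b01-b36) - (b13-b06)*b35 + (-b03-b16)*b34)),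
    -(b02*(b34*(-b12-b34) - b35*(b35-b02) + b36*(b01-b36)) - b03*((b13-b06)*(-b12-b34) - (-b03-b16)*(b35-b02) + (b04+b15)*(b01-b36)) + b04*((b05-b14)*(-b12-b34) - (-b03-b16)*b36 + (b04+b15)*b35) - b05*((b05-b14)*(b35-b02) - (b13-b06)*b36 + (b04+b15)*b34) + b06*((b05-b14)*(b01-b36) - (b13-b06)*b35 + (-b03-b16)*b34)),
    (b01*(b34*(-b12-b34) - b35*(b35-b02) + b36*(b01-b36)) - b03*(b14*(-b12-b34) - b15*(b35-b02) + b16*(b01-b36)) + b04*(b13*(-b12-b34) - b15*b36 + b16*b35) - b05*(b13*(b35-b02) - b14*b36 + b16*b34) + b06*(b13*(b01-b36) - b14*b35 + b15*b34)),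
    -(b01*((b13-b06)*(-b12-b34) - (-b03-b16)*(b35-b02) + (b04+b15)*(b01-b36)) - b02*(b14*(-b12-b34) - b15*(b35-b02) + b16*(b01-b36)) + b04*(b12*(-b12-b34) - b15*(b04+b15) + b16*(-b03-b16)) - b05*(b12*(b35-b02) - b14*(b04+b15) + b16*(b13-b06)) + b06*(b12*(b01-b36) - b14*(-b03-b16) + b15*(b13-b06))),
    (b01*((b05-b14)*(-b12-b34) - (-b03-b16)*b36 + (b04+b15)*b35) - b02*(b13*(-b12-b34) - b15*b36 + b16*b35) + b03*(b12*(-b12-b34) - b15*(b04+b15) + b16*(-b03-b16)) - b05*(b12*b36 - b13*(b04+b15) + b16*(b05-b14)) + b06*(b12*b35 - b13*(-b03-b16) + b15*(b05-b14))),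
    -(b01*((b05-b14)*(b35-b02) - (b13-b06)*b36 + (b04+b15)*b34) - b02*(b13*(b35-b02) - b14*b36 + b16*b34) + b03*(b12*(b35-b02) - b14*(b04+b15) + b16*(b13-b06)) - b04*(b12*b36 - b13*(b04+b15) + b16*(b05-b14)) + b06*(b12*b34 - b13*(b13-b06) + b14*(b05-b14))),
    (b01*((b05-b14)*(b01-b36) - (b13-b06)*b35 + (-b03-b16)*b34) - b02*(b13*(b01-b36) - b14*b35 + b15*b34) + b03*(b12*(b01-b36) - b14*(-b03-b16) + b15*(b13-b06)) - b04*(b12*b35 - b13*(-b03-b16) + b15*(b05-b14)) + b05*(b12*b34 - b13*(b13-b06) + b14*(b05-b14)))]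

/-- The squared norm. -/
def sn (b01 b02 b03 b04 b05 b06 b12 b13 b14 b15 b16 b34 b35 b36 : ℝ) : ℝ :=
  b01^2 + b02^2 + b03^2 + b04^2 + b05^2 + b06^2 + b12^2 + b13^2 + b14^2 + b15^2 + b16^2 + (b05-b14)^2 + (b13-b06)^2 + (-b03-b16)^2 + (b04+b15)^2 + b34^2 + b35^2 + b36^2 + (b01-b36)^2 + (b35-b02)^2 + (-b12-b34)^2

/-- Minus the bracket matrix. -/
def Nm (p : Fin 7 → ℝ) : Matrix (Fin 7) (Fin 7) ℝ :=
  !![0, -p 2, p 1, -p 4, p 3, -p 6, p 5;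
    p 2, 0, -p 0, -p 5, p 6, p 3, -p 4;
    -p 1, p 0, 0, p 6, p 5, -p 4, -p 3;
    p 4, p 5, -p 6, 0, -p 0, -p 1, p 2;
    -p 3, -p 6, -p 5, p 0, 0, p 2, p 1;
    p 6, -p 3, p 4, p 1, -p 2, 0, -p 0;
    -p 5, p 4, p 3, -p 2, -p 1, p 0, 0]

theorem Nm_sq (p : Fin 7 → ℝ) :
    Nm p * Nm p = Matrix.vecMulVec p p - (∑ i, p i ^ 2) • (1 : Matrix (Fin 7) (Fin 7) ℝ) := by
  ext i j
  fin_cases i <;> fin_cases j <;>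
    simp [Nm, Matrix.mul_apply, Fin.sum_univ_succ, Matrix.vecMulVec_apply] <;> ring

theorem Bm_skew (b01 b02 b03 b04 b05 b06 b12 b13 b14 b15 b16 b34 b35 b36 : ℝ) : (Bm b01 b02 b03 b04 b05 b06 b12 b13 b14 b15 b16 b34 b35 b36)ᵀ = - Bm b01 b02 b03 b04 b05 b06 b12 b13 b14 b15 b16 b34 b35 b36 := by
  ext i j
  fin_cases i <;> fin_cases j <;> simp [Bm] <;> ring

set_option maxHeartbeats 2000000 in
theorem pv_Bm (b01 b02 b03 b04 b05 b06 b12 b13 b14 b15 b16 b34 b35 b36 : ℝ) : Matrix.vecMul (pv b01 b02 b03 b04 b05 b06 b12 b13 b14 b15 b16 b34 b35 b36) (Bm b01 b02 b03 b04 b05 b06 b12 b13 b14 b15 b16 b34 b35 b36) = 0 := by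
  ext i
  simp only [Matrix.vecMul, dotProduct, Fin.sum_univ_seven]
  fin_cases i <;>
    simp only [Bm, pv, Matrix.of_apply, Matrix.cons_val, Fin.zero_eta, Fin.mk_one,
      Fin.reduceFinMk, Pi.zero_apply] <;> ring

set_option maxHeartbeats 2000000 in
theorem Bm_cube (b01 b02 b03 b04 b05 b06 b12 b13 b14 b15 b16 b34 b35 b36 : ℝ) :
    Bm b01 b02 b03 b04 b05 b06 b12 b13 b14 b15 b16 b34 b35 b36 * (Bm b01 b02 b03 b04 b05 b06 b12 b13 b14 b15 b16 b34 b35 b36 * Bm b01 b02 b03 b04 b05 b06 b12 b13 b14 b15 b16 b34 b35 b36) + (sn b01 b02 b03 b04 b05 b06 b12 b13 b14 b15 b16 b34 b35 b36 / 2) • Bm b01 b02 b03 b04 b05 b06 b12 b13 b14 b15 b16 b34 b35 b36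
      = Nm (pv b01 b02 b03 b04 b05 b06 b12 b13 b14 b15 b16 b34 b35 b36) := by
  ext i j
  simp only [Matrix.add_apply, Matrix.smul_apply, Matrix.mul_apply, Fin.sum_univ_seven,
    smul_eq_mul, sn]
  fin_cases i <;> fin_cases j <;>
    simp only [Bm, pv, Nm, Matrix.of_apply, Matrix.cons_val, Fin.zero_eta, Fin.mk_one,
      Fin.reduceFinMk] <;> ring

theorem Bm_tr2 (b01 b02 b03 b04 b05 b06 b12 b13 b14 b15 b16 b34 b35 b36 : ℝ) :
    (Bm b01 b02 b03 b04 b05 b06 b12 b13 b14 b15 b16 b34 b35 b36 * Bm b01 b02 b03 b04 b05 b06 b12 b13 b14 b15 b16 b34 b35 b36).trace = -2 * sn b01 b02 b03 b04 b05 b06 b12 b13 b14 b15 b16 b34 b35 b36 := by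
  simp only [Matrix.trace, Matrix.diag, Matrix.mul_apply, Fin.sum_univ_seven]
  simp only [Bm, sn, Matrix.of_apply, Matrix.cons_val]
  ring

theorem Bm_tr4 (b01 b02 b03 b04 b05 b06 b12 b13 b14 b15 b16 b34 b35 b36 : ℝ) :
    ((Bm b01 b02 b03 b04 b05 b06 b12 b13 b14 b15 b16 b34 b35 b36 * Bm b01 b02 b03 b04 b05 b06 b12 b13 b14 b15 b16 b34 b35 b36) * (Bm b01 b02 b03 b04 b05 b06 b12 b13 b14 b15 b16 b34 b35 b36 * Bm b01 b02 b03 b04 b05 b06 b12 b13 b14 b15 b16 b34 b35 b36)).trace = sn b01 b02 b03 b04 b05 b06 b12 b13 b14 b15 b16 b34 b35 b36 ^ 2 := by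
  simp only [Matrix.trace, Matrix.diag, Matrix.mul_apply, Fin.sum_univ_seven]
  simp only [Bm, sn, Matrix.of_apply, Matrix.cons_val]
  ring

theorem skew_tr (X : Matrix (Fin 7) (Fin 7) ℝ) (h : Xᵀ = -X) : (X * X).trace ≤ 0 := by
  have h2 : ∀ i j, X j i = - X i j := fun i j => by
    have := congrFun (congrFun h i) j
    simpa using this
  simp only [Matrix.trace, Matrix.diag, Matrix.mul_apply]
  refine Finset.sum_nonpos fun i _ => Finset.sum_nonpos fun j _ => ?_
  rw [h2 i j]
  nlinarith [sq_nonneg (X i j)]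

theorem alg_bound (B N : Matrix (Fin 7) (Fin 7) ℝ) (s P : ℝ) (hs : 0 ≤ s) (hP : 0 ≤ P)
    (hB : Bᵀ = -B) (hc : B * (B * B) + (s / 2) • B = N)
    (h2 : (B * B).trace = -2 * s) (h4 : (B * B * (B * B)).trace = s ^ 2)
    (hN : (N * N).trace = -6 * P) (hNB : N * N * B = -P • B) : 54 * P ≤ s ^ 3 := by
  have e2 : (B ^ 2).trace = -2 * s := by rw [← h2, pow_two]
  have e4 : (B ^ 4).trace = s ^ 2 := by rw [← h4]; congr 1; noncomm_ring
  have hNN : N * N = B ^ 6 + s • B ^ 4 + (s ^ 2 / 4) • B ^ 2 := by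
    have hc' : N = B ^ 3 + (s / 2) • B ^ 1 := by
      rw [← hc, pow_one]; congr 1; noncomm_ring
    rw [hc']
    simp only [mul_add, add_mul, smul_mul_assoc, mul_smul_comm, smul_smul, ← pow_add, smul_add]
    norm_num only
    module
  have e6 : (B ^ 6).trace + s * (B ^ 4).trace + (s ^ 2 / 4) * (B ^ 2).trace = -6 * P := by
    rw [← hN, hNN]; simp
  rw [hNN] at hNB
  have r7 : B ^ 7 = -P • B - s • B ^ 5 - (s ^ 2 / 4) • B ^ 3 := by
    rw [← hNB]
    simp only [add_mul, smul_mul_assoc, ← pow_succ]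
    module
  have e8 : (B ^ 8).trace = -P * (B ^ 2).trace - s * (B ^ 6).trace - (s ^ 2 / 4) * (B ^ 4).trace := by
    have : B ^ 8 = -P • B ^ 2 - s • B ^ 6 - (s ^ 2 / 4) • B ^ 4 := by
      rw [show B ^ 8 = B ^ 7 * B from pow_succ B 7, r7]
      simp only [sub_mul, smul_mul_assoc, ← pow_succ, ← pow_two]
    rw [this]; simp
  have e10 : (B ^ 10).trace
      = -P * (B ^ 4).trace - s * (B ^ 8).trace - (s ^ 2 / 4) * (B ^ 6).trace := by
    have : B ^ 10 = -P • B ^ 4 - s • B ^ 8 - (s ^ 2 / 4) • B ^ 6 := by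
      rw [show B ^ 10 = B ^ 7 * B ^ 3 from pow_add B 7 3, r7]
      simp only [sub_mul, smul_mul_assoc, ← pow_succ', ← pow_add]
    rw [this]; simp
  have key : ∀ y : ℝ, 0 ≤ P * s ^ 2 / 3 + 12 * y * P + 2 * s * y ^ 2 := by
    intro y
    have h := skew_tr (B ^ 5 + (5 * s / 6) • B ^ 3 + (s ^ 2 / 6 + y) • B) (by
      simp only [Matrix.transpose_add, Matrix.transpose_smul, Matrix.transpose_pow, hB]
      rw [Odd.neg_pow (by decide), Odd.neg_pow (by decide)]
      module)
    have hx : (B ^ 5 + (5 * s / 6) • B ^ 3 + (s ^ 2 / 6 + y) • B)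
        * (B ^ 5 + (5 * s / 6) • B ^ 3 + (s ^ 2 / 6 + y) • B)
        = B ^ 10 + (5 * s / 3) • B ^ 8 + (25 * s ^ 2 / 36 + 2 * (s ^ 2 / 6 + y)) • B ^ 6
          + (5 * s / 3 * (s ^ 2 / 6 + y)) • B ^ 4 + ((s ^ 2 / 6 + y) ^ 2) • B ^ 2 := by
      generalize s ^ 2 / 6 + y = z
      have h1 : z • B = z • B ^ 1 := by rw [pow_one]
      rw [h1]
      simp only [mul_add, add_mul, smul_mul_assoc, mul_smul_comm, smul_smul, ← pow_add, smul_add]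
      norm_num only
      module
    rw [hx] at h
    simp only [Matrix.trace_add, Matrix.trace_smul, smul_eq_mul] at h
    rw [e10, e8] at h
    have e6' : (B ^ 6).trace = -6 * P - s * s ^ 2 - (s ^ 2 / 4) * (-2 * s) := by
      rw [← e6, e4, e2]; ring
    rw [e6', e4, e2] at h
    nlinarith [h]
  rcases hs.eq_or_lt with h0 | h0
  · subst h0
    have := key (-1)
    nlinarith
  · rcases hP.eq_or_lt with h1 | h1
    · subst h1; simp; positivity
    · have := key (-3 * P / s)
      have h3 : P * s ^ 2 / 3 + 12 * (-3 * P / s) * P + 2 * s * (-3 * P / s) ^ 2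
          = (s ^ 3 - 54 * P) * (P / (3 * s)) := by field_simp; ring
      rw [h3] at this
      have h4 : 0 < P / (3 * s) := by positivity
      have := nonneg_of_mul_nonneg_left this h4
      linarith

theorem perm_step {α : Type*} (n : ℕ) (G : (Fin (n + 1) → α) → ℝ) (v : Fin (n + 1) → α) :
    ∑ σ : Equiv.Perm (Fin (n + 1)), ((Equiv.Perm.sign σ : ℤ) : ℝ) * G (v ∘ σ)
    = ∑ p : Fin (n + 1), (if p = 0 then 1 else -1) * ∑ τ : Equiv.Perm (Fin n),
        ((Equiv.Perm.sign τ : ℤ) : ℝ) *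
          G (Matrix.vecCons (v p) ((fun i => v (Equiv.swap 0 p i.succ)) ∘ τ)) := by
  rw [Finset.univ_perm_fin_succ, Finset.sum_map, ← Finset.univ_product_univ, Finset.sum_product]
  refine Finset.sum_congr rfl fun p _ => ?_
  rw [Finset.mul_sum]
  refine Finset.sum_congr rfl fun τ _ => ?_
  have : v ∘ (Equiv.Perm.decomposeFin.symm (p, τ))
      = Matrix.vecCons (v p) ((fun i => v (Equiv.swap 0 p i.succ)) ∘ τ) := by
    funext i
    refine Fin.cases ?_ (fun i => ?_) i
    · simp
    · simp
  simp only [Equiv.toEmbedding_apply, Equiv.Perm.decomposeFin.symm_sign]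
  rw [this]
  by_cases hp : p = 0 <;> simp [hp]

theorem perm2 {α : Type*} (g : α → α → ℝ) (v : Fin 2 → α) :
    ∑ σ : Equiv.Perm (Fin 2), ((Equiv.Perm.sign σ : ℤ) : ℝ) * (g (v (σ 0)) (v (σ 1)))
    = g (v 0) (v 1) - g (v 1) (v 0) := by
  refine (perm_step 1 (fun w => g (w 0) (w 1)) v).trans ?_
  simp [Fin.sum_univ_succ]
  ring

theorem perm3 {α : Type*} (g : α → α → α → ℝ) (v : Fin 3 → α) :
    ∑ σ : Equiv.Perm (Fin 3), ((Equiv.Perm.sign σ : ℤ) : ℝ) * (g (v (σ 0)) (v (σ 1)) (v (σ 2)))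
    = (g (v 0) (v 1) (v 2) - g (v 0) (v 2) (v 1)) - (g (v 1) (v 0) (v 2) - g (v 1) (v 2) (v 0))
      - (g (v 2) (v 1) (v 0) - g (v 2) (v 0) (v 1)) := by
  refine (perm_step 2 (fun w => g (w 0) (w 1) (w 2)) v).trans ?_
  refine (Finset.sum_congr rfl fun p _ => congrArg _
    (perm2 (fun x y => g (v p) x y) (fun i => v (Equiv.swap 0 p i.succ)))).trans ?_
  simp only [Fin.sum_univ_succ, Fin.sum_univ_zero]
  have t1 : Equiv.swap (0 : Fin 3) 1 2 = 2 := by decide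
  have t2 : Equiv.swap (0 : Fin 3) 2 1 = 1 := by decide
  simp [t1, t2]
  ring

theorem perm4 {α : Type*} (f : α → α → ℝ) (hf : ∀ x y, f y x = - f x y) (v : Fin 4 → α) :
    ∑ σ : Equiv.Perm (Fin 4), ((Equiv.Perm.sign σ : ℤ) : ℝ) *
      (f (v (σ 0)) (v (σ 1)) * f (v (σ 2)) (v (σ 3)))
    = 8 * (f (v 0) (v 1) * f (v 2) (v 3) - f (v 0) (v 2) * f (v 1) (v 3)
        + f (v 0) (v 3) * f (v 1) (v 2)) := by
  refine (perm_step 3 (fun w => f (w 0) (w 1) * f (w 2) (w 3)) v).trans ?_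
  refine (Finset.sum_congr rfl fun p _ => congrArg _
    (perm3 (fun x y z => f (v p) x * f y z) (fun i => v (Equiv.swap 0 p i.succ)))).trans ?_
  refine (Fin.sum_univ_four _).trans ?_
  have e0 : (0 : Fin 3).succ = 1 := rfl
  have e1 : (1 : Fin 3).succ = 2 := rfl
  have e2 : (2 : Fin 3).succ = 3 := rfl
  simp only [e0, e1, e2,
    show Equiv.swap (0 : Fin 4) 0 1 = 1 by decide, show Equiv.swap (0 : Fin 4) 0 2 = 2 by decide,
    show Equiv.swap (0 : Fin 4) 0 3 = 3 by decide, show Equiv.swap (0 : Fin 4) 1 1 = 0 by decide,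
    show Equiv.swap (0 : Fin 4) 1 2 = 2 by decide, show Equiv.swap (0 : Fin 4) 1 3 = 3 by decide,
    show Equiv.swap (0 : Fin 4) 2 1 = 1 by decide, show Equiv.swap (0 : Fin 4) 2 2 = 0 by decide,
    show Equiv.swap (0 : Fin 4) 2 3 = 3 by decide, show Equiv.swap (0 : Fin 4) 3 1 = 1 by decide,
    show Equiv.swap (0 : Fin 4) 3 2 = 2 by decide, show Equiv.swap (0 : Fin 4) 3 3 = 0 by decide]
  simp only [hf (v 0) (v 1), hf (v 0) (v 2), hf (v 0) (v 3), hf (v 1) (v 2), hf (v 1) (v 3),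
    hf (v 2) (v 3), if_true, show (1 : Fin 4) ≠ 0 by decide, show (2 : Fin 4) ≠ 0 by decide,
    show (3 : Fin 4) ≠ 0 by decide, if_false]
  ring

theorem perm5 {α : Type*} (f : α → α → ℝ) (hf : ∀ x y, f y x = - f x y) (x : α)
    (v : Fin 5 → α) :
    ∑ σ : Equiv.Perm (Fin 5), ((Equiv.Perm.sign σ : ℤ) : ℝ) *
      (f x (v (σ 0)) * f (v (σ 1)) (v (σ 2)) * f (v (σ 3)) (v (σ 4)))
    = 8 * (f x (v 0) * (f (v 1) (v 2) * f (v 3) (v 4) - f (v 1) (v 3) * f (v 2) (v 4)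
            + f (v 1) (v 4) * f (v 2) (v 3))
         - f x (v 1) * (f (v 0) (v 2) * f (v 3) (v 4) - f (v 0) (v 3) * f (v 2) (v 4)
            + f (v 0) (v 4) * f (v 2) (v 3))
         + f x (v 2) * (f (v 0) (v 1) * f (v 3) (v 4) - f (v 0) (v 3) * f (v 1) (v 4)
            + f (v 0) (v 4) * f (v 1) (v 3))
         - f x (v 3) * (f (v 0) (v 1) * f (v 2) (v 4) - f (v 0) (v 2) * f (v 1) (v 4)
            + f (v 0) (v 4) * f (v 1) (v 2))
         + f x (v 4) * (f (v 0) (v 1) * f (v 2) (v 3) - f (v 0) (v 2) * f (v 1) (v 3)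
            + f (v 0) (v 3) * f (v 1) (v 2))) := by
  refine (perm_step 4 (fun w => f x (w 0) * f (w 1) (w 2) * f (w 3) (w 4)) v).trans ?_
  have key : ∀ p : Fin 5, (∑ τ : Equiv.Perm (Fin 4), ((Equiv.Perm.sign τ : ℤ) : ℝ) *
      (f x (v p) * f (v (Equiv.swap 0 p (τ 0).succ)) (v (Equiv.swap 0 p (τ 1).succ))
        * f (v (Equiv.swap 0 p (τ 2).succ)) (v (Equiv.swap 0 p (τ 3).succ)))) = _ := fun p => by
    refine Eq.trans ?_ (congrArg (fun t => f x (v p) * t)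
      (perm4 f hf (fun i => v (Equiv.swap 0 p i.succ))))
    rw [Finset.mul_sum]
    exact Finset.sum_congr rfl fun τ _ => by ring
  refine (Finset.sum_congr rfl fun p _ => congrArg _ (key p)).trans ?_
  refine (Fin.sum_univ_five _).trans ?_
  have e0 : (0 : Fin 4).succ = 1 := rfl
  have e1 : (1 : Fin 4).succ = 2 := rfl
  have e2 : (2 : Fin 4).succ = 3 := rfl
  have e3 : (3 : Fin 4).succ = 4 := rfl
  simp only [e0, e1, e2, e3,
    show Equiv.swap (0 : Fin 5) 0 1 = 1 by decide,
    show Equiv.swap (0 : Fin 5) 0 2 = 2 by decide,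
    show Equiv.swap (0 : Fin 5) 0 3 = 3 by decide,
    show Equiv.swap (0 : Fin 5) 0 4 = 4 by decide,
    show Equiv.swap (0 : Fin 5) 1 1 = 0 by decide,
    show Equiv.swap (0 : Fin 5) 1 2 = 2 by decide,
    show Equiv.swap (0 : Fin 5) 1 3 = 3 by decide,
    show Equiv.swap (0 : Fin 5) 1 4 = 4 by decide,
    show Equiv.swap (0 : Fin 5) 2 1 = 1 by decide,
    show Equiv.swap (0 : Fin 5) 2 2 = 0 by decide,
    show Equiv.swap (0 : Fin 5) 2 3 = 3 by decide,
    show Equiv.swap (0 : Fin 5) 2 4 = 4 by decide,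
    show Equiv.swap (0 : Fin 5) 3 1 = 1 by decide,
    show Equiv.swap (0 : Fin 5) 3 2 = 2 by decide,
    show Equiv.swap (0 : Fin 5) 3 3 = 0 by decide,
    show Equiv.swap (0 : Fin 5) 3 4 = 4 by decide,
    show Equiv.swap (0 : Fin 5) 4 1 = 1 by decide,
    show Equiv.swap (0 : Fin 5) 4 2 = 2 by decide,
    show Equiv.swap (0 : Fin 5) 4 3 = 3 by decide,
    show Equiv.swap (0 : Fin 5) 4 4 = 0 by decide]
  simp only [hf (v 0) (v 1), hf (v 0) (v 2), hf (v 0) (v 3), hf (v 0) (v 4), hf (v 1) (v 2),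
    hf (v 1) (v 3), hf (v 1) (v 4), hf (v 2) (v 3), hf (v 2) (v 4), hf (v 3) (v 4), if_true,
    show (1 : Fin 5) ≠ 0 by decide, show (2 : Fin 5) ≠ 0 by decide,
    show (3 : Fin 5) ≠ 0 by decide, show (4 : Fin 5) ≠ 0 by decide, if_false]
  ring

theorem perm6 {α : Type*} (f : α → α → ℝ) (hf : ∀ x y, f y x = - f x y) (v : Fin 6 → α) :
    ∑ σ : Equiv.Perm (Fin 6), ((Equiv.Perm.sign σ : ℤ) : ℝ) *
      (f (v (σ 0)) (v (σ 1)) * f (v (σ 2)) (v (σ 3)) * f (v (σ 4)) (v (σ 5)))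
    = 48 * (f (v 0) (v 1) * (f (v 2) (v 3) * f (v 4) (v 5) - f (v 2) (v 4) * f (v 3) (v 5)
            + f (v 2) (v 5) * f (v 3) (v 4))
         - f (v 0) (v 2) * (f (v 1) (v 3) * f (v 4) (v 5) - f (v 1) (v 4) * f (v 3) (v 5)
            + f (v 1) (v 5) * f (v 3) (v 4))
         + f (v 0) (v 3) * (f (v 1) (v 2) * f (v 4) (v 5) - f (v 1) (v 4) * f (v 2) (v 5)
            + f (v 1) (v 5) * f (v 2) (v 4))
         - f (v 0) (v 4) * (f (v 1) (v 2) * f (v 3) (v 5) - f (v 1) (v 3) * f (v 2) (v 5)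
            + f (v 1) (v 5) * f (v 2) (v 3))
         + f (v 0) (v 5) * (f (v 1) (v 2) * f (v 3) (v 4) - f (v 1) (v 3) * f (v 2) (v 4)
            + f (v 1) (v 4) * f (v 2) (v 3))) := by
  refine (perm_step 5 (fun w => f (w 0) (w 1) * f (w 2) (w 3) * f (w 4) (w 5)) v).trans ?_
  refine (Finset.sum_congr rfl fun p _ => congrArg _
    (perm5 f hf (v p) (fun i => v (Equiv.swap 0 p i.succ)))).trans ?_
  refine (Fin.sum_univ_six _).trans ?_
  have e0 : (0 : Fin 5).succ = 1 := rfl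
  have e1 : (1 : Fin 5).succ = 2 := rfl
  have e2 : (2 : Fin 5).succ = 3 := rfl
  have e3 : (3 : Fin 5).succ = 4 := rfl
  have e4 : (4 : Fin 5).succ = 5 := rfl
  simp only [e0, e1, e2, e3, e4,
    show Equiv.swap (0 : Fin 6) 0 1 = 1 by decide,
    show Equiv.swap (0 : Fin 6) 0 2 = 2 by decide,
    show Equiv.swap (0 : Fin 6) 0 3 = 3 by decide,
    show Equiv.swap (0 : Fin 6) 0 4 = 4 by decide,
    show Equiv.swap (0 : Fin 6) 0 5 = 5 by decide,
    show Equiv.swap (0 : Fin 6) 1 1 = 0 by decide,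
    show Equiv.swap (0 : Fin 6) 1 2 = 2 by decide,
    show Equiv.swap (0 : Fin 6) 1 3 = 3 by decide,
    show Equiv.swap (0 : Fin 6) 1 4 = 4 by decide,
    show Equiv.swap (0 : Fin 6) 1 5 = 5 by decide,
    show Equiv.swap (0 : Fin 6) 2 1 = 1 by decide,
    show Equiv.swap (0 : Fin 6) 2 2 = 0 by decide,
    show Equiv.swap (0 : Fin 6) 2 3 = 3 by decide,
    show Equiv.swap (0 : Fin 6) 2 4 = 4 by decide,
    show Equiv.swap (0 : Fin 6) 2 5 = 5 by decide,
    show Equiv.swap (0 : Fin 6) 3 1 = 1 by decide,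
    show Equiv.swap (0 : Fin 6) 3 2 = 2 by decide,
    show Equiv.swap (0 : Fin 6) 3 3 = 0 by decide,
    show Equiv.swap (0 : Fin 6) 3 4 = 4 by decide,
    show Equiv.swap (0 : Fin 6) 3 5 = 5 by decide,
    show Equiv.swap (0 : Fin 6) 4 1 = 1 by decide,
    show Equiv.swap (0 : Fin 6) 4 2 = 2 by decide,
    show Equiv.swap (0 : Fin 6) 4 3 = 3 by decide,
    show Equiv.swap (0 : Fin 6) 4 4 = 0 by decide,
    show Equiv.swap (0 : Fin 6) 4 5 = 5 by decide,
    show Equiv.swap (0 : Fin 6) 5 1 = 1 by decide,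
    show Equiv.swap (0 : Fin 6) 5 2 = 2 by decide,
    show Equiv.swap (0 : Fin 6) 5 3 = 3 by decide,
    show Equiv.swap (0 : Fin 6) 5 4 = 4 by decide,
    show Equiv.swap (0 : Fin 6) 5 5 = 0 by decide]
  simp only [hf (v 0) (v 1), hf (v 0) (v 2), hf (v 0) (v 3), hf (v 0) (v 4), hf (v 0) (v 5),
    hf (v 1) (v 2), hf (v 1) (v 3), hf (v 1) (v 4), hf (v 1) (v 5), hf (v 2) (v 3), hf (v 2) (v 4),
    hf (v 2) (v 5), hf (v 3) (v 4), hf (v 3) (v 5), hf (v 4) (v 5), if_true,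
    show (1 : Fin 6) ≠ 0 by decide, show (2 : Fin 6) ≠ 0 by decide, show (3 : Fin 6) ≠ 0 by decide,
    show (4 : Fin 6) ≠ 0 by decide, show (5 : Fin 6) ≠ 0 by decide, if_false]
  ring

theorem eps_rel0 (b : Fin 7 → Fin 7 → ℝ) : ∑ j : Fin 7, ∑ k : Fin 7, eps 0 j k * b j k
    = (1) * b 1 2 + (-1) * b 2 1 + (1) * b 3 4 + (-1) * b 4 3 + (1) * b 5 6 + (-1) * b 6 5 := by
  simp [Fin.sum_univ_seven, eps, phi, w3, e]
  try ring

theorem eps_rel1 (b : Fin 7 → Fin 7 → ℝ) : ∑ j : Fin 7, ∑ k : Fin 7, eps 1 j k * b j k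
    = (-1) * b 0 2 + (1) * b 2 0 + (1) * b 3 5 + (-1) * b 4 6 + (-1) * b 5 3 + (1) * b 6 4 := by
  simp [Fin.sum_univ_seven, eps, phi, w3, e]
  try ring

theorem eps_rel2 (b : Fin 7 → Fin 7 → ℝ) : ∑ j : Fin 7, ∑ k : Fin 7, eps 2 j k * b j k
    = (1) * b 0 1 + (-1) * b 1 0 + (-1) * b 3 6 + (-1) * b 4 5 + (1) * b 5 4 + (1) * b 6 3 := by
  simp [Fin.sum_univ_seven, eps, phi, w3, e]
  try ring

theorem eps_rel3 (b : Fin 7 → Fin 7 → ℝ) : ∑ j : Fin 7, ∑ k : Fin 7, eps 3 j k * b j k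
    = (-1) * b 0 4 + (-1) * b 1 5 + (1) * b 2 6 + (1) * b 4 0 + (1) * b 5 1 + (-1) * b 6 2 := by
  simp [Fin.sum_univ_seven, eps, phi, w3, e]
  try ring

theorem eps_rel4 (b : Fin 7 → Fin 7 → ℝ) : ∑ j : Fin 7, ∑ k : Fin 7, eps 4 j k * b j k
    = (1) * b 0 3 + (1) * b 1 6 + (1) * b 2 5 + (-1) * b 3 0 + (-1) * b 5 2 + (-1) * b 6 1 := by
  simp [Fin.sum_univ_seven, eps, phi, w3, e]
  try ring

theorem eps_rel5 (b : Fin 7 → Fin 7 → ℝ) : ∑ j : Fin 7, ∑ k : Fin 7, eps 5 j k * b j k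
    = (-1) * b 0 6 + (1) * b 1 3 + (-1) * b 2 4 + (-1) * b 3 1 + (1) * b 4 2 + (1) * b 6 0 := by
  simp [Fin.sum_univ_seven, eps, phi, w3, e]
  try ring

theorem eps_rel6 (b : Fin 7 → Fin 7 → ℝ) : ∑ j : Fin 7, ∑ k : Fin 7, eps 6 j k * b j k
    = (1) * b 0 5 + (-1) * b 1 4 + (-1) * b 2 3 + (1) * b 3 2 + (1) * b 4 1 + (-1) * b 5 0 := by
  simp [Fin.sum_univ_seven, eps, phi, w3, e]
  try ring

theorem cut0 (g : Fin 7 → ℝ) : (∑ x : Fin 7, if (0 : Fin 7) < x then g x else 0)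
    = g 1 + g 2 + g 3 + g 4 + g 5 + g 6 := by
  simp [Fin.sum_univ_seven]

theorem cut1 (g : Fin 7 → ℝ) : (∑ x : Fin 7, if (1 : Fin 7) < x then g x else 0)
    = g 2 + g 3 + g 4 + g 5 + g 6 := by
  simp [Fin.sum_univ_seven]

theorem cut2 (g : Fin 7 → ℝ) : (∑ x : Fin 7, if (2 : Fin 7) < x then g x else 0)
    = g 3 + g 4 + g 5 + g 6 := by
  simp [Fin.sum_univ_seven]

theorem cut3 (g : Fin 7 → ℝ) : (∑ x : Fin 7, if (3 : Fin 7) < x then g x else 0)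
    = g 4 + g 5 + g 6 := by
  simp [Fin.sum_univ_seven]

theorem cut4 (g : Fin 7 → ℝ) : (∑ x : Fin 7, if (4 : Fin 7) < x then g x else 0)
    = g 5 + g 6 := by
  simp [Fin.sum_univ_seven]

theorem cut5 (g : Fin 7 → ℝ) : (∑ x : Fin 7, if (5 : Fin 7) < x then g x else 0)
    = g 6 := by
  simp [Fin.sum_univ_seven]

theorem cut6 (g : Fin 7 → ℝ) : (∑ x : Fin 7, if (6 : Fin 7) < x then g x else 0)
    = 0 := by
  simp [Fin.sum_univ_seven]

theorem pull (P : Prop) [Decidable P] (g : Fin 7 → ℝ) :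
    (∑ x : Fin 7, if P then g x else 0) = if P then ∑ x : Fin 7, g x else 0 := by
  split_ifs <;> simp

theorem six_sum (G : Fin 7 → Fin 7 → Fin 7 → Fin 7 → Fin 7 → Fin 7 → ℝ) :
    (∑ a₁ : Fin 7, ∑ a₂ : Fin 7, ∑ a₃ : Fin 7, ∑ a₄ : Fin 7, ∑ a₅ : Fin 7, ∑ a₆ : Fin 7,
        if a₁ < a₂ ∧ a₂ < a₃ ∧ a₃ < a₄ ∧ a₄ < a₅ ∧ a₅ < a₆ then G a₁ a₂ a₃ a₄ a₅ a₆ else 0)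
    = G 1 2 3 4 5 6 + G 0 2 3 4 5 6 + G 0 1 3 4 5 6 + G 0 1 2 4 5 6 + G 0 1 2 3 5 6 + G 0 1 2 3 4 6 + G 0 1 2 3 4 5 := by
  simp only [ite_and, pull]
  rw [Fin.sum_univ_seven]
  simp only [cut0, cut1, cut2, cut3, cut4, cut5, cut6]
  ring

theorem two_sum (G : Fin 7 → Fin 7 → ℝ) :
    (∑ a : Fin 7, ∑ b : Fin 7, if a < b then G a b else 0)
    = G 0 1 + G 0 2 + G 0 3 + G 0 4 + G 0 5 + G 0 6 + G 1 2 + G 1 3 + G 1 4 + G 1 5 + G 1 6 + G 2 3 + G 2 4 + G 2 5 + G 2 6 + G 3 4 + G 3 5 + G 3 6 + G 4 5 + G 4 6 + G 5 6 := by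
  rw [Fin.sum_univ_seven]
  simp only [cut0, cut1, cut2, cut3, cut4, cut5, cut6]
  ring

theorem wedge6 (f : (Fin 7 → ℝ) → (Fin 7 → ℝ) → ℝ) (hf : ∀ x y, f y x = - f x y)
    (a b c d x y : Fin 7 → ℝ) :
    wedge222 f f f ![a, b, c, d, x, y]
    = 6 * (f a b * (f c d * f x y - f c x * f d y + f c y * f d x)
         - f a c * (f b d * f x y - f b x * f d y + f b y * f d x)
         + f a d * (f b c * f x y - f b x * f c y + f b y * f c x)
         - f a x * (f b c * f d y - f b d * f c y + f b y * f c d)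
         + f a y * (f b c * f d x - f b d * f c x + f b x * f c d)) := by
  unfold wedge222
  rw [perm6 f hf]
  simp only [Matrix.cons_val]
  ring

theorem core_bound (b01 b02 b03 b04 b05 b06 b12 b13 b14 b15 b16 b34 b35 b36 : ℝ) :
    54 * (∑ i, pv b01 b02 b03 b04 b05 b06 b12 b13 b14 b15 b16 b34 b35 b36 i ^ 2) ≤ sn b01 b02 b03 b04 b05 b06 b12 b13 b14 b15 b16 b34 b35 b36 ^ 3 := by
  have hvB := pv_Bm b01 b02 b03 b04 b05 b06 b12 b13 b14 b15 b16 b34 b35 b36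
  have hsq := Nm_sq (pv b01 b02 b03 b04 b05 b06 b12 b13 b14 b15 b16 b34 b35 b36)
  refine alg_bound (Bm b01 b02 b03 b04 b05 b06 b12 b13 b14 b15 b16 b34 b35 b36) (Nm (pv b01 b02 b03 b04 b05 b06 b12 b13 b14 b15 b16 b34 b35 b36)) (sn b01 b02 b03 b04 b05 b06 b12 b13 b14 b15 b16 b34 b35 b36)
    (∑ i, pv b01 b02 b03 b04 b05 b06 b12 b13 b14 b15 b16 b34 b35 b36 i ^ 2) ?_ ?_ (Bm_skew b01 b02 b03 b04 b05 b06 b12 b13 b14 b15 b16 b34 b35 b36) (Bm_cube b01 b02 b03 b04 b05 b06 b12 b13 b14 b15 b16 b34 b35 b36) (Bm_tr2 b01 b02 b03 b04 b05 b06 b12 b13 b14 b15 b16 b34 b35 b36) (Bm_tr4 b01 b02 b03 b04 b05 b06 b12 b13 b14 b15 b16 b34 b35 b36) ?_ ?_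
  · unfold sn; positivity
  · positivity
  · rw [hsq]
    simp [Matrix.trace_sub, Matrix.trace_vecMulVec, dotProduct, pow_two]
    ring
  · rw [hsq, sub_mul, Matrix.vecMulVec_mul, hvB]
    simp

/-- for `β` in `Λ²₁₄`, `|β∧β∧β|² ≤ (2/3)|β|⁶`. -/
theorem wedge_cube_norm_le (β : AlternatingMap ℝ (Fin 7 → ℝ) ℝ (Fin 2))
    (hβ : ∀ i : Fin 7, ∑ j : Fin 7, ∑ k : Fin 7, eps i j k * β ![e j, e k] = 0) :
    (∑ a₁ : Fin 7, ∑ a₂ : Fin 7, ∑ a₃ : Fin 7, ∑ a₄ : Fin 7, ∑ a₅ : Fin 7, ∑ a₆ : Fin 7,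
        if a₁ < a₂ ∧ a₂ < a₃ ∧ a₃ < a₄ ∧ a₄ < a₅ ∧ a₅ < a₆ then
          (wedge222 (fun x y => β ![x, y]) (fun x y => β ![x, y]) (fun x y => β ![x, y])
            ![e a₁, e a₂, e a₃, e a₄, e a₅, e a₆]) ^ 2
        else 0)
      ≤ (2 / 3 : ℝ)
          * (∑ a : Fin 7, ∑ b : Fin 7, if a < b then (β ![e a, e b]) ^ 2 else 0) ^ 3 := by
  have hf : ∀ x y : Fin 7 → ℝ, β ![y, x] = - β ![x, y] := by
    intro x y
    have h := β.map_swap ![x, y] (show (0 : Fin 2) ≠ 1 by decide)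
    rw [← h]
    congr 1
    ext i
    fin_cases i <;> simp
  obtain ⟨b01, h01⟩ : ∃ x, β ![e 0, e 1] = x := ⟨_, rfl⟩
  obtain ⟨b02, h02⟩ : ∃ x, β ![e 0, e 2] = x := ⟨_, rfl⟩
  obtain ⟨b03, h03⟩ : ∃ x, β ![e 0, e 3] = x := ⟨_, rfl⟩
  obtain ⟨b04, h04⟩ : ∃ x, β ![e 0, e 4] = x := ⟨_, rfl⟩
  obtain ⟨b05, h05⟩ : ∃ x, β ![e 0, e 5] = x := ⟨_, rfl⟩
  obtain ⟨b06, h06⟩ : ∃ x, β ![e 0, e 6] = x := ⟨_, rfl⟩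
  obtain ⟨b12, h12⟩ : ∃ x, β ![e 1, e 2] = x := ⟨_, rfl⟩
  obtain ⟨b13, h13⟩ : ∃ x, β ![e 1, e 3] = x := ⟨_, rfl⟩
  obtain ⟨b14, h14⟩ : ∃ x, β ![e 1, e 4] = x := ⟨_, rfl⟩
  obtain ⟨b15, h15⟩ : ∃ x, β ![e 1, e 5] = x := ⟨_, rfl⟩
  obtain ⟨b16, h16⟩ : ∃ x, β ![e 1, e 6] = x := ⟨_, rfl⟩
  obtain ⟨b34, h34⟩ : ∃ x, β ![e 3, e 4] = x := ⟨_, rfl⟩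
  obtain ⟨b35, h35⟩ : ∃ x, β ![e 3, e 5] = x := ⟨_, rfl⟩
  obtain ⟨b36, h36⟩ : ∃ x, β ![e 3, e 6] = x := ⟨_, rfl⟩
  have h56 : β ![e 5, e 6] = (-b12-b34) := by
    have h := (eps_rel0 (fun j k => β ![e j, e k])).symm.trans (hβ 0)
    simp only [hf (e 1) (e 2), hf (e 3) (e 4), hf (e 5) (e 6)] at h
    linarith
  have h46 : β ![e 4, e 6] = (b35-b02) := by
    have h := (eps_rel1 (fun j k => β ![e j, e k])).symm.trans (hβ 1)
    simp only [hf (e 0) (e 2), hf (e 3) (e 5), hf (e 4) (e 6)] at h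
    linarith
  have h45 : β ![e 4, e 5] = (b01-b36) := by
    have h := (eps_rel2 (fun j k => β ![e j, e k])).symm.trans (hβ 2)
    simp only [hf (e 0) (e 1), hf (e 3) (e 6), hf (e 4) (e 5)] at h
    linarith
  have h26 : β ![e 2, e 6] = (b04+b15) := by
    have h := (eps_rel3 (fun j k => β ![e j, e k])).symm.trans (hβ 3)
    simp only [hf (e 0) (e 4), hf (e 1) (e 5), hf (e 2) (e 6)] at h
    linarith
  have h25 : β ![e 2, e 5] = (-b03-b16) := by
    have h := (eps_rel4 (fun j k => β ![e j, e k])).symm.trans (hβ 4)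
    simp only [hf (e 0) (e 3), hf (e 1) (e 6), hf (e 2) (e 5)] at h
    linarith
  have h24 : β ![e 2, e 4] = (b13-b06) := by
    have h := (eps_rel5 (fun j k => β ![e j, e k])).symm.trans (hβ 5)
    simp only [hf (e 0) (e 6), hf (e 1) (e 3), hf (e 2) (e 4)] at h
    linarith
  have h23 : β ![e 2, e 3] = (b05-b14) := by
    have h := (eps_rel6 (fun j k => β ![e j, e k])).symm.trans (hβ 6)
    simp only [hf (e 0) (e 5), hf (e 1) (e 4), hf (e 2) (e 3)] at h
    linarith
  have w0 : wedge222 (fun x y => β ![x, y]) (fun x y => β ![x, y]) (fun x y => β ![x, y])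
      ![e 1, e 2, e 3, e 4, e 5, e 6] = 6 * pv b01 b02 b03 b04 b05 b06 b12 b13 b14 b15 b16 b34 b35 b36 0 := by
    rw [wedge6 (fun x y => β ![x, y]) hf]
    simp only [h01, h02, h03, h04, h05, h06, h12, h13, h14, h15, h16, h23, h24, h25, h26, h34, h35, h36, h45, h46, h56, pv, Matrix.cons_val]
    try ring
  have w1 : wedge222 (fun x y => β ![x, y]) (fun x y => β ![x, y]) (fun x y => β ![x, y])
      ![e 0, e 2, e 3, e 4, e 5, e 6] = -6 * pv b01 b02 b03 b04 b05 b06 b12 b13 b14 b15 b16 b34 b35 b36 1 := by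
    rw [wedge6 (fun x y => β ![x, y]) hf]
    simp only [h01, h02, h03, h04, h05, h06, h12, h13, h14, h15, h16, h23, h24, h25, h26, h34, h35, h36, h45, h46, h56, pv, Matrix.cons_val]
    try ring
  have w2 : wedge222 (fun x y => β ![x, y]) (fun x y => β ![x, y]) (fun x y => β ![x, y])
      ![e 0, e 1, e 3, e 4, e 5, e 6] = 6 * pv b01 b02 b03 b04 b05 b06 b12 b13 b14 b15 b16 b34 b35 b36 2 := by
    rw [wedge6 (fun x y => β ![x, y]) hf]
    simp only [h01, h02, h03, h04, h05, h06, h12, h13, h14, h15, h16, h23, h24, h25, h26, h34, h35, h36, h45, h46, h56, pv, Matrix.cons_val]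
    try ring
  have w3 : wedge222 (fun x y => β ![x, y]) (fun x y => β ![x, y]) (fun x y => β ![x, y])
      ![e 0, e 1, e 2, e 4, e 5, e 6] = -6 * pv b01 b02 b03 b04 b05 b06 b12 b13 b14 b15 b16 b34 b35 b36 3 := by
    rw [wedge6 (fun x y => β ![x, y]) hf]
    simp only [h01, h02, h03, h04, h05, h06, h12, h13, h14, h15, h16, h23, h24, h25, h26, h34, h35, h36, h45, h46, h56, pv, Matrix.cons_val]
    try ring
  have w4 : wedge222 (fun x y => β ![x, y]) (fun x y => β ![x, y]) (fun x y => β ![x, y])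
      ![e 0, e 1, e 2, e 3, e 5, e 6] = 6 * pv b01 b02 b03 b04 b05 b06 b12 b13 b14 b15 b16 b34 b35 b36 4 := by
    rw [wedge6 (fun x y => β ![x, y]) hf]
    simp only [h01, h02, h03, h04, h05, h06, h12, h13, h14, h15, h16, h23, h24, h25, h26, h34, h35, h36, h45, h46, h56, pv, Matrix.cons_val]
    try ring
  have w5 : wedge222 (fun x y => β ![x, y]) (fun x y => β ![x, y]) (fun x y => β ![x, y])
      ![e 0, e 1, e 2, e 3, e 4, e 6] = -6 * pv b01 b02 b03 b04 b05 b06 b12 b13 b14 b15 b16 b34 b35 b36 5 := by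
    rw [wedge6 (fun x y => β ![x, y]) hf]
    simp only [h01, h02, h03, h04, h05, h06, h12, h13, h14, h15, h16, h23, h24, h25, h26, h34, h35, h36, h45, h46, h56, pv, Matrix.cons_val]
    try ring
  have w6 : wedge222 (fun x y => β ![x, y]) (fun x y => β ![x, y]) (fun x y => β ![x, y])
      ![e 0, e 1, e 2, e 3, e 4, e 5] = 6 * pv b01 b02 b03 b04 b05 b06 b12 b13 b14 b15 b16 b34 b35 b36 6 := by
    rw [wedge6 (fun x y => β ![x, y]) hf]
    simp only [h01, h02, h03, h04, h05, h06, h12, h13, h14, h15, h16, h23, h24, h25, h26, h34, h35, h36, h45, h46, h56, pv, Matrix.cons_val]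
    try ring
  rw [six_sum (fun a₁ a₂ a₃ a₄ a₅ a₆ => (wedge222 (fun x y => β ![x, y]) (fun x y => β ![x, y])
    (fun x y => β ![x, y]) ![e a₁, e a₂, e a₃, e a₄, e a₅, e a₆]) ^ 2),
    two_sum (fun a b => (β ![e a, e b]) ^ 2)]
  have hsn : β ![e 0, e 1] ^ 2 + β ![e 0, e 2] ^ 2 + β ![e 0, e 3] ^ 2 + β ![e 0, e 4] ^ 2 + β ![e 0, e 5] ^ 2 + β ![e 0, e 6] ^ 2 + β ![e 1, e 2] ^ 2 + β ![e 1, e 3] ^ 2 + β ![e 1, e 4] ^ 2 + β ![e 1, e 5] ^ 2 + β ![e 1, e 6] ^ 2 + β ![e 2, e 3] ^ 2 + β ![e 2, e 4] ^ 2 + β ![e 2, e 5] ^ 2 + β ![e 2, e 6] ^ 2 + β ![e 3, e 4] ^ 2 + β ![e 3, e 5] ^ 2 + β ![e 3, e 6] ^ 2 + β ![e 4, e 5] ^ 2 + β ![e 4, e 6] ^ 2 + β ![e 5, e 6] ^ 2 = sn b01 b02 b03 b04 b05 b06 b12 b13 b14 b15 b16 b34 b35 b36 := by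
    simp only [h01, h02, h03, h04, h05, h06, h12, h13, h14, h15, h16, h23, h24, h25, h26, h34, h35, h36, h45, h46, h56, sn]
  have hc := core_bound b01 b02 b03 b04 b05 b06 b12 b13 b14 b15 b16 b34 b35 b36
  rw [Fin.sum_univ_seven] at hc
  simp only [w0, w1, w2, w3, w4, w5, w6, hsn]
  linarith

end G2

end
end

section
/- Let β be an alternating 2-form on ℝ⁷ satisfying Σ_{j,k=1}^{7} ε_{ijk} β(e_j,e_k) = 0 for every i ∈ {1,…,7}. Then |β∧β + (1/7)|β|²·ψ|² = (6/7)|β|⁴, where |β|² := Σ_{a<b} β(e_a,e_b)² and the squared norm of a 4-form ξ is |ξ|² := Σ_{a<b<c<d} ξ(e_a,e_b,e_c,e_d)². In particular, the Λ⁴₂₇-component β∧β + (1/7)|β|²·ψ of β∧β vanishes only if β = 0. -/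
open scoped BigOperators Matrix

noncomputable section

namespace G2

lemma sum2_lt (F : Fin 7 → Fin 7 → ℝ) :
    (∑ a : Fin 7, ∑ b : Fin 7, if a < b then F a b else 0) = F 0 1 + F 0 2 + F 0 3 + F 0 4 + F 0 5 + F 0 6 + F 1 2 + F 1 3 + F 1 4 + F 1 5 + F 1 6 + F 2 3 + F 2 4 + F 2 5 + F 2 6 + F 3 4 + F 3 5 + F 3 6 + F 4 5 + F 4 6 + F 5 6 := by
  simp [Fin.sum_univ_seven]
  ring

lemma sum3_lt (a : Fin 7) (F : Fin 7 → Fin 7 → Fin 7 → ℝ) :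
    (∑ b : Fin 7, ∑ c : Fin 7, ∑ d : Fin 7, if a < b ∧ b < c ∧ c < d then F b c d else 0) =
    ∑ b : Fin 7, if a < b then ∑ c : Fin 7, if b < c then ∑ d : Fin 7, if c < d then F b c d
      else 0 else 0 else 0 := by
  refine Finset.sum_congr rfl fun b _ => ?_
  by_cases h : a < b
  · simp only [h, true_and, if_true]
    refine Finset.sum_congr rfl fun c _ => ?_
    by_cases h : b < c <;> simp [h]
  · simp [h]

lemma sum4_lt (F : Fin 7 → Fin 7 → Fin 7 → Fin 7 → ℝ) :
    (∑ a : Fin 7, ∑ b : Fin 7, ∑ c : Fin 7, ∑ d : Fin 7,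
      if a < b ∧ b < c ∧ c < d then F a b c d else 0) = F 0 1 2 3 + F 0 1 2 4 + F 0 1 2 5 + F 0 1 2 6 + F 0 1 3 4 + F 0 1 3 5 + F 0 1 3 6 + F 0 1 4 5 + F 0 1 4 6 + F 0 1 5 6 + F 0 2 3 4 + F 0 2 3 5 + F 0 2 3 6 + F 0 2 4 5 + F 0 2 4 6 + F 0 2 5 6 + F 0 3 4 5 + F 0 3 4 6 + F 0 3 5 6 + F 0 4 5 6 + F 1 2 3 4 + F 1 2 3 5 + F 1 2 3 6 + F 1 2 4 5 + F 1 2 4 6 + F 1 2 5 6 + F 1 3 4 5 + F 1 3 4 6 + F 1 3 5 6 + F 1 4 5 6 + F 2 3 4 5 + F 2 3 4 6 + F 2 3 5 6 + F 2 4 5 6 + F 3 4 5 6 := by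
  simp only [sum3_lt]
  simp [Fin.sum_univ_seven]
  ring

lemma sum_perm_succ (n : ℕ) (f : Equiv.Perm (Fin (n + 1)) → ℝ) :
    ∑ σ, f σ = ∑ p : Fin (n + 1), ∑ τ : Equiv.Perm (Fin n),
      f (Equiv.Perm.decomposeFin.symm (p, τ)) := by
  rw [← Equiv.sum_comp Equiv.Perm.decomposeFin.symm f, Fintype.sum_prod_type]

lemma wedge22_self (A : (Fin 7 → ℝ) → (Fin 7 → ℝ) → ℝ) (hA : ∀ x y, A y x = - A x y)
    (x y z w : Fin 7 → ℝ) :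
    wedge22 A A ![x, y, z, w] = 2 * (A x y * A z w - A x z * A y w + A x w * A y z) := by
  unfold wedge22
  have h2 : (2 : Fin 4) = Fin.succ (Fin.succ 0) := rfl
  have h3 : (3 : Fin 4) = Fin.succ (Fin.succ (Fin.succ 0)) := rfl
  have h1 : (1 : Fin 4) = Fin.succ 0 := rfl
  have s1 : ∀ a b : Fin 4, Equiv.swap a b 0 = if 0 = a then b else if 0 = b then a else 0 :=
    fun a b => Equiv.swap_apply_def a b 0
  rw [h1, h2, h3]
  simp only [sum_perm_succ, Fin.sum_univ_succ, Equiv.Perm.decomposeFin_symm_apply_succ,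
    Equiv.Perm.decomposeFin_symm_apply_zero, Equiv.Perm.decomposeFin.symm_sign]
  simp [Equiv.swap_apply_def, Fin.ext_iff]
  rw [hA x y, hA x z, hA x w, hA y z, hA y w, hA z w]
  ring

lemma w4_eq (a b c d : Fin 7) (x y z w : Fin 7 → ℝ) : w4 a b c d x y z w =
    (x a * y b - x b * y a) * (z c * w d - z d * w c)
    - (x a * y c - x c * y a) * (z b * w d - z d * w b)
    + (x a * y d - x d * y a) * (z b * w c - z c * w b)
    + (x b * y c - x c * y b) * (z a * w d - z d * w a)
    - (x b * y d - x d * y b) * (z a * w c - z c * w a)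
    + (x c * y d - x d * y c) * (z a * w b - z b * w a) := by
  simp [w4, Matrix.det_succ_row_zero, Fin.sum_univ_succ, Fin.succAbove]
  ring

lemma psi_0123 : psi (e 0) (e 1) (e 2) (e 3) = 0 := by
  simp [psi, w4_eq, e]

lemma psi_0124 : psi (e 0) (e 1) (e 2) (e 4) = 0 := by
  simp [psi, w4_eq, e]

lemma psi_0125 : psi (e 0) (e 1) (e 2) (e 5) = 0 := by
  simp [psi, w4_eq, e]

lemma psi_0126 : psi (e 0) (e 1) (e 2) (e 6) = 0 := by
  simp [psi, w4_eq, e]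

lemma psi_0134 : psi (e 0) (e 1) (e 3) (e 4) = 0 := by
  simp [psi, w4_eq, e]

lemma psi_0135 : psi (e 0) (e 1) (e 3) (e 5) = 0 := by
  simp [psi, w4_eq, e]

lemma psi_0136 : psi (e 0) (e 1) (e 3) (e 6) = -1 := by
  simp [psi, w4_eq, e]

lemma psi_0145 : psi (e 0) (e 1) (e 4) (e 5) = -1 := by
  simp [psi, w4_eq, e]

lemma psi_0146 : psi (e 0) (e 1) (e 4) (e 6) = 0 := by
  simp [psi, w4_eq, e]

lemma psi_0156 : psi (e 0) (e 1) (e 5) (e 6) = 0 := by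
  simp [psi, w4_eq, e]

lemma psi_0234 : psi (e 0) (e 2) (e 3) (e 4) = 0 := by
  simp [psi, w4_eq, e]

lemma psi_0235 : psi (e 0) (e 2) (e 3) (e 5) = -1 := by
  simp [psi, w4_eq, e]

lemma psi_0236 : psi (e 0) (e 2) (e 3) (e 6) = 0 := by
  simp [psi, w4_eq, e]

lemma psi_0245 : psi (e 0) (e 2) (e 4) (e 5) = 0 := by
  simp [psi, w4_eq, e]

lemma psi_0246 : psi (e 0) (e 2) (e 4) (e 6) = 1 := by
  simp [psi, w4_eq, e]

lemma psi_0256 : psi (e 0) (e 2) (e 5) (e 6) = 0 := by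
  simp [psi, w4_eq, e]

lemma psi_0345 : psi (e 0) (e 3) (e 4) (e 5) = 0 := by
  simp [psi, w4_eq, e]

lemma psi_0346 : psi (e 0) (e 3) (e 4) (e 6) = 0 := by
  simp [psi, w4_eq, e]

lemma psi_0356 : psi (e 0) (e 3) (e 5) (e 6) = 0 := by
  simp [psi, w4_eq, e]

lemma psi_0456 : psi (e 0) (e 4) (e 5) (e 6) = 0 := by
  simp [psi, w4_eq, e]

lemma psi_1234 : psi (e 1) (e 2) (e 3) (e 4) = 1 := by
  simp [psi, w4_eq, e]

lemma psi_1235 : psi (e 1) (e 2) (e 3) (e 5) = 0 := by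
  simp [psi, w4_eq, e]

lemma psi_1236 : psi (e 1) (e 2) (e 3) (e 6) = 0 := by
  simp [psi, w4_eq, e]

lemma psi_1245 : psi (e 1) (e 2) (e 4) (e 5) = 0 := by
  simp [psi, w4_eq, e]

lemma psi_1246 : psi (e 1) (e 2) (e 4) (e 6) = 0 := by
  simp [psi, w4_eq, e]

lemma psi_1256 : psi (e 1) (e 2) (e 5) (e 6) = 1 := by
  simp [psi, w4_eq, e]

lemma psi_1345 : psi (e 1) (e 3) (e 4) (e 5) = 0 := by
  simp [psi, w4_eq, e]

lemma psi_1346 : psi (e 1) (e 3) (e 4) (e 6) = 0 := by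
  simp [psi, w4_eq, e]

lemma psi_1356 : psi (e 1) (e 3) (e 5) (e 6) = 0 := by
  simp [psi, w4_eq, e]

lemma psi_1456 : psi (e 1) (e 4) (e 5) (e 6) = 0 := by
  simp [psi, w4_eq, e]

lemma psi_2345 : psi (e 2) (e 3) (e 4) (e 5) = 0 := by
  simp [psi, w4_eq, e]

lemma psi_2346 : psi (e 2) (e 3) (e 4) (e 6) = 0 := by
  simp [psi, w4_eq, e]

lemma psi_2356 : psi (e 2) (e 3) (e 5) (e 6) = 0 := by
  simp [psi, w4_eq, e]

lemma psi_2456 : psi (e 2) (e 4) (e 5) (e 6) = 0 := by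
  simp [psi, w4_eq, e]

lemma psi_3456 : psi (e 3) (e 4) (e 5) (e 6) = 1 := by
  simp [psi, w4_eq, e]

lemma lin_id (b01 b02 b03 b04 b05 b06 b12 b13 b14 b15 b16 b23 b24 b25 b26 b34 b35 b36 b45 b46 b56 : ℝ)
    (h0 : (1) * b12 + (1) * b34 + (1) * b56 = 0)
    (h1 : (-1) * b02 + (1) * b35 + (-1) * b46 = 0)
    (h2 : (1) * b01 + (-1) * b36 + (-1) * b45 = 0)
    (h3 : (-1) * b04 + (-1) * b15 + (1) * b26 = 0)
    (h4 : (1) * b03 + (1) * b16 + (1) * b25 = 0)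
    (h5 : (-1) * b06 + (1) * b13 + (-1) * b24 = 0)
    (h6 : (1) * b05 + (-1) * b14 + (-1) * b23 = 0) :
    (1) * (2 * (b34 * b56 - b35 * b46 + b36 * b45)) + (1) * (2 * (b12 * b56 - b15 * b26 + b16 * b25)) + (1) * (2 * (b12 * b34 - b13 * b24 + b14 * b23)) + (1) * (2 * (b02 * b46 - b04 * b26 + b06 * b24)) + (-1) * (2 * (b02 * b35 - b03 * b25 + b05 * b23)) + (-1) * (2 * (b01 * b45 - b04 * b15 + b05 * b14)) + (-1) * (2 * (b01 * b36 - b03 * b16 + b06 * b13)) = -(b01 ^ 2 + b02 ^ 2 + b03 ^ 2 + b04 ^ 2 + b05 ^ 2 + b06 ^ 2 + b12 ^ 2 + b13 ^ 2 + b14 ^ 2 + b15 ^ 2 + b16 ^ 2 + b23 ^ 2 + b24 ^ 2 + b25 ^ 2 + b26 ^ 2 + b34 ^ 2 + b35 ^ 2 + b36 ^ 2 + b45 ^ 2 + b46 ^ 2 + b56 ^ 2) := by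
  have k0 : b12 = (-1) * b34 + (-1) * b56 := by linarith
  have k1 : b02 = (1) * b35 + (-1) * b46 := by linarith
  have k2 : b01 = (1) * b36 + (1) * b45 := by linarith
  have k3 : b04 = (-1) * b15 + (1) * b26 := by linarith
  have k4 : b03 = (-1) * b16 + (-1) * b25 := by linarith
  have k5 : b06 = (1) * b13 + (-1) * b24 := by linarith
  have k6 : b05 = (1) * b14 + (1) * b23 := by linarith
  subst k0 k1 k2 k3 k4 k5 k6
  ring

lemma quart_id (b01 b02 b03 b04 b05 b06 b12 b13 b14 b15 b16 b23 b24 b25 b26 b34 b35 b36 b45 b46 b56 : ℝ)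
    (h0 : (1) * b12 + (1) * b34 + (1) * b56 = 0)
    (h1 : (-1) * b02 + (1) * b35 + (-1) * b46 = 0)
    (h2 : (1) * b01 + (-1) * b36 + (-1) * b45 = 0)
    (h3 : (-1) * b04 + (-1) * b15 + (1) * b26 = 0)
    (h4 : (1) * b03 + (1) * b16 + (1) * b25 = 0)
    (h5 : (-1) * b06 + (1) * b13 + (-1) * b24 = 0)
    (h6 : (1) * b05 + (-1) * b14 + (-1) * b23 = 0) :
    (2 * (b01 * b23 - b02 * b13 + b03 * b12)) ^ 2 + (2 * (b01 * b24 - b02 * b14 + b04 * b12)) ^ 2 + (2 * (b01 * b25 - b02 * b15 + b05 * b12)) ^ 2 + (2 * (b01 * b26 - b02 * b16 + b06 * b12)) ^ 2 + (2 * (b01 * b34 - b03 * b14 + b04 * b13)) ^ 2 + (2 * (b01 * b35 - b03 * b15 + b05 * b13)) ^ 2 + (2 * (b01 * b36 - b03 * b16 + b06 * b13)) ^ 2 + (2 * (b01 * b45 - b04 * b15 + b05 * b14)) ^ 2 + (2 * (b01 * b46 - b04 * b16 + b06 * b14)) ^ 2 + (2 * (b01 * b56 - b05 * b16 + b06 *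 b15)) ^ 2 + (2 * (b02 * b34 - b03 * b24 + b04 * b23)) ^ 2 + (2 * (b02 * b35 - b03 * b25 + b05 * b23)) ^ 2 + (2 * (b02 * b36 - b03 * b26 + b06 * b23)) ^ 2 + (2 * (b02 * b45 - b04 * b25 + b05 * b24)) ^ 2 + (2 * (b02 * b46 - b04 * b26 + b06 * b24)) ^ 2 + (2 * (b02 * b56 - b05 * b26 + b06 * b25)) ^ 2 + (2 * (b03 * b45 - b04 * b35 + b05 * b34)) ^ 2 + (2 * (b03 * b46 - b04 * b36 + b06 * b34)) ^ 2 + (2 * (b03 * b56 - b05 * b36 + b06 * b35)) ^ 2 + (2 * (b04 * b56 - b05 * b46 + b06 * b45)) ^ 2 + (2 * (b12 * b34 - b13 * b24 + b14 * b23)) ^ 2 + (2 * (b12 * b35 - b13 * b25 + b15 * b23)) ^ 2 + (2 * (b12 * b36 - b13 * b26 + b16 * b23)) ^ 2 + (2 * (b12 * b45 - b14 * b25 + b15 * b24)) ^ 2 + (2 * (b12 * b46 - b14 * b26 + b16 * b24)) ^ 2 + (2 * (b12 * b56 - b15 * b26 + b16 * b25)) ^ 2 + (2 * (b13 * b45 -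 b14 * b35 + b15 * b34)) ^ 2 + (2 * (b13 * b46 - b14 * b36 + b16 * b34)) ^ 2 + (2 * (b13 * b56 - b15 * b36 + b16 * b35)) ^ 2 + (2 * (b14 * b56 - b15 * b46 + b16 * b45)) ^ 2 + (2 * (b23 * b45 - b24 * b35 + b25 * b34)) ^ 2 + (2 * (b23 * b46 - b24 * b36 + b26 * b34)) ^ 2 + (2 * (b23 * b56 - b25 * b36 + b26 * b35)) ^ 2 + (2 * (b24 * b56 - b25 * b46 + b26 * b45)) ^ 2 + (2 * (b34 * b56 - b35 * b46 + b36 * b45)) ^ 2 = (b01 ^ 2 + b02 ^ 2 + b03 ^ 2 + b04 ^ 2 + b05 ^ 2 + b06 ^ 2 + b12 ^ 2 + b13 ^ 2 + b14 ^ 2 + b15 ^ 2 + b16 ^ 2 + b23 ^ 2 + b24 ^ 2 + b25 ^ 2 + b26 ^ 2 + b34 ^ 2 + b35 ^ 2 + b36 ^ 2 + b45 ^ 2 + b46 ^ 2 + b56 ^ 2) ^ 2 := by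
  have k0 : b12 = (-1) * b34 + (-1) * b56 := by linarith
  have k1 : b02 = (1) * b35 + (-1) * b46 := by linarith
  have k2 : b01 = (1) * b36 + (1) * b45 := by linarith
  have k3 : b04 = (-1) * b15 + (1) * b26 := by linarith
  have k4 : b03 = (-1) * b16 + (-1) * b25 := by linarith
  have k5 : b06 = (1) * b13 + (-1) * b24 := by linarith
  have k6 : b05 = (1) * b14 + (1) * b23 := by linarith
  subst k0 k1 k2 k3 k4 k5 k6
  ring


lemma eps_sum0 (B : Fin 7 → Fin 7 → ℝ) (hB : ∀ i j, B j i = - B i j)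
    (h : ∑ j : Fin 7, ∑ k : Fin 7, eps 0 j k * B j k = 0) : (1) * B 1 2 + (1) * B 3 4 + (1) * B 5 6 = 0 := by
  simp [Fin.sum_univ_seven, eps, phi, w3, e, hB 1 2, hB 3 4, hB 5 6] at h
  linarith

lemma eps_sum1 (B : Fin 7 → Fin 7 → ℝ) (hB : ∀ i j, B j i = - B i j)
    (h : ∑ j : Fin 7, ∑ k : Fin 7, eps 1 j k * B j k = 0) : (-1) * B 0 2 + (1) * B 3 5 + (-1) * B 4 6 = 0 := by
  simp [Fin.sum_univ_seven, eps, phi, w3, e, hB 0 2, hB 3 5, hB 4 6] at h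
  linarith

lemma eps_sum2 (B : Fin 7 → Fin 7 → ℝ) (hB : ∀ i j, B j i = - B i j)
    (h : ∑ j : Fin 7, ∑ k : Fin 7, eps 2 j k * B j k = 0) : (1) * B 0 1 + (-1) * B 3 6 + (-1) * B 4 5 = 0 := by
  simp [Fin.sum_univ_seven, eps, phi, w3, e, hB 0 1, hB 3 6, hB 4 5] at h
  linarith

lemma eps_sum3 (B : Fin 7 → Fin 7 → ℝ) (hB : ∀ i j, B j i = - B i j)
    (h : ∑ j : Fin 7, ∑ k : Fin 7, eps 3 j k * B j k = 0) : (-1) * B 0 4 + (-1) * B 1 5 + (1) * B 2 6 = 0 := by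
  simp [Fin.sum_univ_seven, eps, phi, w3, e, hB 0 4, hB 1 5, hB 2 6] at h
  linarith

lemma eps_sum4 (B : Fin 7 → Fin 7 → ℝ) (hB : ∀ i j, B j i = - B i j)
    (h : ∑ j : Fin 7, ∑ k : Fin 7, eps 4 j k * B j k = 0) : (1) * B 0 3 + (1) * B 1 6 + (1) * B 2 5 = 0 := by
  simp [Fin.sum_univ_seven, eps, phi, w3, e, hB 0 3, hB 1 6, hB 2 5] at h
  linarith

lemma eps_sum5 (B : Fin 7 → Fin 7 → ℝ) (hB : ∀ i j, B j i = - B i j)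
    (h : ∑ j : Fin 7, ∑ k : Fin 7, eps 5 j k * B j k = 0) : (-1) * B 0 6 + (1) * B 1 3 + (-1) * B 2 4 = 0 := by
  simp [Fin.sum_univ_seven, eps, phi, w3, e, hB 0 6, hB 1 3, hB 2 4] at h
  linarith

lemma eps_sum6 (B : Fin 7 → Fin 7 → ℝ) (hB : ∀ i j, B j i = - B i j)
    (h : ∑ j : Fin 7, ∑ k : Fin 7, eps 6 j k * B j k = 0) : (1) * B 0 5 + (-1) * B 1 4 + (-1) * B 2 3 = 0 := by
  simp [Fin.sum_univ_seven, eps, phi, w3, e, hB 0 5, hB 1 4, hB 2 3] at h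
  linarith

lemma norm_id (B : Fin 7 → Fin 7 → ℝ) (hB : ∀ i j, B j i = - B i j)
    (h : ∀ i, ∑ j : Fin 7, ∑ k : Fin 7, eps i j k * B j k = 0) :
    (∑ a : Fin 7, ∑ b : Fin 7, ∑ c : Fin 7, ∑ d : Fin 7,
        if a < b ∧ b < c ∧ c < d then
          (2 * (B a b * B c d - B a c * B b d + B a d * B b c)
            + (1 / 7 : ℝ) * (∑ a' : Fin 7, ∑ b' : Fin 7, if a' < b' then (B a' b') ^ 2 else 0)
                * psi (e a) (e b) (e c) (e d)) ^ 2
        else 0)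
      = (6 / 7 : ℝ) * (∑ a : Fin 7, ∑ b : Fin 7, if a < b then (B a b) ^ 2 else 0) ^ 2 := by
  have h1 := lin_id (B 0 1) (B 0 2) (B 0 3) (B 0 4) (B 0 5) (B 0 6) (B 1 2) (B 1 3) (B 1 4) (B 1 5) (B 1 6) (B 2 3) (B 2 4) (B 2 5) (B 2 6) (B 3 4) (B 3 5) (B 3 6) (B 4 5) (B 4 6) (B 5 6) (eps_sum0 B hB (h 0)) (eps_sum1 B hB (h 1)) (eps_sum2 B hB (h 2)) (eps_sum3 B hB (h 3)) (eps_sum4 B hB (h 4)) (eps_sum5 B hB (h 5)) (eps_sum6 B hB (h 6))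
  have h2 := quart_id (B 0 1) (B 0 2) (B 0 3) (B 0 4) (B 0 5) (B 0 6) (B 1 2) (B 1 3) (B 1 4) (B 1 5) (B 1 6) (B 2 3) (B 2 4) (B 2 5) (B 2 6) (B 3 4) (B 3 5) (B 3 6) (B 4 5) (B 4 6) (B 5 6) (eps_sum0 B hB (h 0)) (eps_sum1 B hB (h 1)) (eps_sum2 B hB (h 2)) (eps_sum3 B hB (h 3)) (eps_sum4 B hB (h 4)) (eps_sum5 B hB (h 5)) (eps_sum6 B hB (h 6))
  have hN := sum2_lt (fun a b => (B a b) ^ 2)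
  rw [← hN] at h1 h2
  generalize (∑ a : Fin 7, ∑ b : Fin 7, if a < b then (B a b) ^ 2 else 0) = N at *
  rw [sum4_lt (fun a b c d => (2 * (B a b * B c d - B a c * B b d + B a d * B b c)
            + (1 / 7 : ℝ) * N * psi (e a) (e b) (e c) (e d)) ^ 2)]
  simp only [psi_0123, psi_0124, psi_0125, psi_0126, psi_0134, psi_0135, psi_0136, psi_0145, psi_0146, psi_0156, psi_0234, psi_0235, psi_0236, psi_0245, psi_0246, psi_0256, psi_0345, psi_0346, psi_0356, psi_0456, psi_1234, psi_1235, psi_1236, psi_1245, psi_1246, psi_1256, psi_1345, psi_1346, psi_1356, psi_1456, psi_2345, psi_2346, psi_2356, psi_2456, psi_3456]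
  linear_combination h2 + (2 / 7) * N * h1

lemma alt_ext_zero (β : AlternatingMap ℝ (Fin 7 → ℝ) ℝ (Fin 2))
    (h : ∀ a b, β ![e a, e b] = 0) : β = 0 := by
  refine Module.Basis.ext_alternating (Pi.basisFun ℝ (Fin 7)) fun v _ => ?_
  have he : ∀ i, Pi.basisFun ℝ (Fin 7) i = e i := by
    intro i; ext j; simp [e, Pi.single_apply]
  have : (fun i => Pi.basisFun ℝ (Fin 7) (v i)) = ![e (v 0), e (v 1)] := by
    funext i; fin_cases i <;> simp only [he] <;> rfl
  rw [this, h]; rfl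

/-- for `β` in `Λ²₁₄`, `|β∧β + (1/7)|β|²·ψ|² = (6/7)|β|⁴`; in particular the
`Λ⁴₂₇`-component `β∧β + (1/7)|β|²·ψ` of `β∧β` vanishes only if `β = 0`. -/
theorem wedge_sq_27_component (β : AlternatingMap ℝ (Fin 7 → ℝ) ℝ (Fin 2))
    (hβ : ∀ i : Fin 7, ∑ j : Fin 7, ∑ k : Fin 7, eps i j k * β ![e j, e k] = 0) :
    (∑ a : Fin 7, ∑ b : Fin 7, ∑ c : Fin 7, ∑ d : Fin 7,
        if a < b ∧ b < c ∧ c < d then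
          (wedge22 (fun x y => β ![x, y]) (fun x y => β ![x, y]) ![e a, e b, e c, e d]
            + (1 / 7 : ℝ)
                * (∑ a' : Fin 7, ∑ b' : Fin 7, if a' < b' then (β ![e a', e b']) ^ 2 else 0)
                * psi (e a) (e b) (e c) (e d)) ^ 2
        else 0)
      = (6 / 7 : ℝ)
          * (∑ a : Fin 7, ∑ b : Fin 7, if a < b then (β ![e a, e b]) ^ 2 else 0) ^ 2
    ∧ ((∀ x y z w : Fin 7 → ℝ,
          wedge22 (fun x' y' => β ![x', y']) (fun x' y' => β ![x', y']) ![x, y, z, w]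
            + (1 / 7 : ℝ)
                * (∑ a : Fin 7, ∑ b : Fin 7, if a < b then (β ![e a, e b]) ^ 2 else 0)
                * psi x y z w = 0) → β = 0) := by
  have hA : ∀ x y : Fin 7 → ℝ, β ![y, x] = - β ![x, y] := by
    intro x y
    have := β.map_swap ![x, y] (i := 0) (j := 1) (by decide)
    rw [← this]
    congr 1
    funext i
    fin_cases i <;> simp
  have key := norm_id (fun a b => β ![e a, e b]) (fun a b => hA _ _) hβ
  simp only at key
  have main1 : (∑ a : Fin 7, ∑ b : Fin 7, ∑ c : Fin 7, ∑ d : Fin 7,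
        if a < b ∧ b < c ∧ c < d then
          (wedge22 (fun x y => β ![x, y]) (fun x y => β ![x, y]) ![e a, e b, e c, e d]
            + (1 / 7 : ℝ)
                * (∑ a' : Fin 7, ∑ b' : Fin 7, if a' < b' then (β ![e a', e b']) ^ 2 else 0)
                * psi (e a) (e b) (e c) (e d)) ^ 2
        else 0)
      = (6 / 7 : ℝ)
          * (∑ a : Fin 7, ∑ b : Fin 7, if a < b then (β ![e a, e b]) ^ 2 else 0) ^ 2 := by
    rw [← key]
    simp only [wedge22_self (fun x y => β ![x, y]) hA]
  refine ⟨main1, fun h => ?_⟩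
  simp only [h] at main1
  have hN : (∑ a : Fin 7, ∑ b : Fin 7, if a < b then (β ![e a, e b]) ^ 2 else 0) = 0 := by
    simp only [ne_eq, OfNat.ofNat_ne_zero, not_false_eq_true, zero_pow, ite_self,
      Finset.sum_const_zero] at main1
    have : (∑ a : Fin 7, ∑ b : Fin 7, if a < b then (β ![e a, e b]) ^ 2 else 0) ^ 2 = 0 := by
      linarith
    exact pow_eq_zero_iff (two_ne_zero) |>.1 this
  have hnn : ∀ a b : Fin 7, 0 ≤ if a < b then (β ![e a, e b]) ^ 2 else 0 := by
    intro a b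
    split_ifs <;> positivity
  have hlt : ∀ a b : Fin 7, a < b → β ![e a, e b] = 0 := by
    intro a b hab
    have h1 := (Finset.sum_eq_zero_iff_of_nonneg
      (fun a _ => Finset.sum_nonneg fun b _ => hnn a b)).1 hN a (Finset.mem_univ _)
    have h2 := (Finset.sum_eq_zero_iff_of_nonneg (fun b _ => hnn a b)).1 h1 b (Finset.mem_univ _)
    rw [if_pos hab] at h2
    exact pow_eq_zero_iff (two_ne_zero) |>.1 h2
  refine alt_ext_zero β fun a b => ?_
  rcases lt_trichotomy a b with hab | hab | hab
  · exact hlt a b hab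
  · subst hab
    have := hA (e a) (e a)
    linarith
  · rw [hA, hlt b a hab, neg_zero]


end G2

end
end

section
/- Let α and β be alternating 2-forms on ℝ⁷, each satisfying Σ_{j,k=1}^{7} ε_{ijk} γ(e_j,e_k) = 0 for every i ∈ {1,…,7} (γ = α, β). Then there exists g ∈ GL(7,ℝ) with g*φ = φ and g*α = β if and only if |α|² = |β|² and |α∧α∧α|² = |β∧β∧β|², where |γ|² := Σ_{a<b} γ(e_a,e_b)² and the squared norm of a 6-form ξ is |ξ|² := Σ_{a₁<⋯<a₆} ξ(e_{a₁},…,e_{a₆})². -/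
open scoped BigOperators Matrix

noncomputable section

namespace G2

/-- The squared norm `Σ_{a<b} γ(e_a,e_b)²` of a 2-form. -/
def normSq2 (γ : AlternatingMap ℝ (Fin 7 → ℝ) ℝ (Fin 2)) : ℝ :=
  ∑ a : Fin 7, ∑ b : Fin 7, if a < b then (γ ![e a, e b]) ^ 2 else 0

/-- The squared norm `Σ_{a₁<⋯<a₆} (γ∧γ∧γ)(e_{a₁},…,e_{a₆})²` of the cube of a 2-form. -/
def normSqCube (γ : AlternatingMap ℝ (Fin 7 → ℝ) ℝ (Fin 2)) : ℝ :=
  ∑ a₁ : Fin 7, ∑ a₂ : Fin 7, ∑ a₃ : Fin 7, ∑ a₄ : Fin 7, ∑ a₅ : Fin 7, ∑ a₆ : Fin 7,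
    if a₁ < a₂ ∧ a₂ < a₃ ∧ a₃ < a₄ ∧ a₄ < a₅ ∧ a₅ < a₆ then
      (wedge222 (fun x y => γ ![x, y]) (fun x y => γ ![x, y]) (fun x y => γ ![x, y])
        ![e a₁, e a₂, e a₃, e a₄, e a₅, e a₆]) ^ 2
    else 0

/-- cross product -/
def cr (x y : Fin 7 → ℝ) : Fin 7 → ℝ :=
  ![x 1 * y 2 - x 2 * y 1 + (x 3 * y 4 - x 4 * y 3) + (x 5 * y 6 - x 6 * y 5),
    x 2 * y 0 - x 0 * y 2 + (x 3 * y 5 - x 5 * y 3) - (x 4 * y 6 - x 6 * y 4),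
    x 0 * y 1 - x 1 * y 0 - (x 3 * y 6 - x 6 * y 3) - (x 4 * y 5 - x 5 * y 4),
    x 4 * y 0 - x 0 * y 4 + (x 5 * y 1 - x 1 * y 5) - (x 6 * y 2 - x 2 * y 6),
    x 0 * y 3 - x 3 * y 0 - (x 6 * y 1 - x 1 * y 6) - (x 5 * y 2 - x 2 * y 5),
    x 6 * y 0 - x 0 * y 6 + (x 1 * y 3 - x 3 * y 1) - (x 2 * y 4 - x 4 * y 2),
    x 0 * y 5 - x 5 * y 0 - (x 1 * y 4 - x 4 * y 1) - (x 2 * y 3 - x 3 * y 2)]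

def dt (x y : Fin 7 → ℝ) : ℝ :=
  x 0 * y 0 + x 1 * y 1 + x 2 * y 2 + x 3 * y 3 + x 4 * y 4 + x 5 * y 5 + x 6 * y 6

theorem ext7 {x y : Fin 7 → ℝ} (h0 : x 0 = y 0) (h1 : x 1 = y 1) (h2 : x 2 = y 2)
    (h3 : x 3 = y 3) (h4 : x 4 = y 4) (h5 : x 5 = y 5) (h6 : x 6 = y 6) : x = y := by
  funext i; fin_cases i <;> assumption

theorem cr0 (x y) : cr x y 0 = x 1 * y 2 - x 2 * y 1 + (x 3 * y 4 - x 4 * y 3) + (x 5 * y 6 - x 6 * y 5) := rfl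
theorem cr1 (x y) : cr x y 1 = x 2 * y 0 - x 0 * y 2 + (x 3 * y 5 - x 5 * y 3) - (x 4 * y 6 - x 6 * y 4) := rfl
theorem cr2 (x y) : cr x y 2 = x 0 * y 1 - x 1 * y 0 - (x 3 * y 6 - x 6 * y 3) - (x 4 * y 5 - x 5 * y 4) := rfl
theorem cr3 (x y) : cr x y 3 = x 4 * y 0 - x 0 * y 4 + (x 5 * y 1 - x 1 * y 5) - (x 6 * y 2 - x 2 * y 6) := rfl
theorem cr4 (x y) : cr x y 4 = x 0 * y 3 - x 3 * y 0 - (x 6 * y 1 - x 1 * y 6) - (x 5 * y 2 - x 2 * y 5) := rfl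
theorem cr5 (x y) : cr x y 5 = x 6 * y 0 - x 0 * y 6 + (x 1 * y 3 - x 3 * y 1) - (x 2 * y 4 - x 4 * y 2) := rfl
theorem cr6 (x y) : cr x y 6 = x 0 * y 5 - x 5 * y 0 - (x 1 * y 4 - x 4 * y 1) - (x 2 * y 3 - x 3 * y 2) := rfl

theorem phi_eq (x y z) : phi x y z = dt (cr x y) z := by
  simp only [phi, w3, dt, cr0, cr1, cr2, cr3, cr4, cr5, cr6]; ring

theorem cr_lin (x y z) : cr x (cr y z) + cr y (cr x z) =
    (-2 * dt x y) • z + dt x z • y + dt y z • x := by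
  apply ext7 <;>
  simp only [Pi.add_apply, Pi.smul_apply, smul_eq_mul, dt, cr0, cr1, cr2, cr3, cr4, cr5, cr6] <;> ring

theorem cr_add_left (x y z) : cr (x + y) z = cr x z + cr y z := by
  apply ext7 <;> simp only [Pi.add_apply, cr0, cr1, cr2, cr3, cr4, cr5, cr6] <;> ring
theorem cr_add_right (x y z) : cr x (y + z) = cr x y + cr x z := by
  apply ext7 <;> simp only [Pi.add_apply, cr0, cr1, cr2, cr3, cr4, cr5, cr6] <;> ring
theorem cr_smul_left (r : ℝ) (x y) : cr (r • x) y = r • cr x y := by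
  apply ext7 <;> simp only [Pi.smul_apply, smul_eq_mul, cr0, cr1, cr2, cr3, cr4, cr5, cr6] <;> ring
theorem cr_smul_right (r : ℝ) (x y) : cr x (r • y) = r • cr x y := by
  apply ext7 <;> simp only [Pi.smul_apply, smul_eq_mul, cr0, cr1, cr2, cr3, cr4, cr5, cr6] <;> ring
theorem cr_anti (x y) : cr x y = - cr y x := by
  apply ext7 <;> simp only [Pi.neg_apply, cr0, cr1, cr2, cr3, cr4, cr5, cr6] <;> ring
theorem cr_self (x) : cr x x = 0 := by
  apply ext7 <;> simp only [Pi.zero_apply, cr0, cr1, cr2, cr3, cr4, cr5, cr6] <;> ring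
theorem cr_neg_left (x y) : cr (-x) y = - cr x y := by
  apply ext7 <;> simp only [Pi.neg_apply, cr0, cr1, cr2, cr3, cr4, cr5, cr6] <;> ring
theorem cr_neg_right (x y) : cr x (-y) = - cr x y := by
  apply ext7 <;> simp only [Pi.neg_apply, cr0, cr1, cr2, cr3, cr4, cr5, cr6] <;> ring
theorem cr_zero_left (y) : cr 0 y = 0 := by
  apply ext7 <;> simp only [Pi.zero_apply, cr0, cr1, cr2, cr3, cr4, cr5, cr6] <;> ring
theorem dt_comm (x y) : dt x y = dt y x := by simp only [dt]; ring
theorem dt_add_left (x y z) : dt (x + y) z = dt x z + dt y z := by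
  simp only [dt, Pi.add_apply]; ring
theorem dt_add_right (x y z) : dt x (y + z) = dt x y + dt x z := by
  simp only [dt, Pi.add_apply]; ring
theorem dt_smul_left (r : ℝ) (x y) : dt (r • x) y = r * dt x y := by
  simp only [dt, Pi.smul_apply, smul_eq_mul]; ring
theorem dt_smul_right (r : ℝ) (x y) : dt x (r • y) = r * dt x y := by
  simp only [dt, Pi.smul_apply, smul_eq_mul]; ring
theorem dt_neg_left (x y) : dt (-x) y = - dt x y := by simp only [dt, Pi.neg_apply]; ring
theorem dt_neg_right (x y) : dt x (-y) = - dt x y := by simp only [dt, Pi.neg_apply]; ring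
theorem dt_zero_left (x) : dt 0 x = 0 := by simp [dt]
theorem dt_zero_right (x) : dt x 0 = 0 := by simp [dt]
/-- cyclicity -/
theorem dt_cr (x y z) : dt (cr x y) z = dt x (cr y z) := by
  simp only [dt, cr0, cr1, cr2, cr3, cr4, cr5, cr6]; ring
theorem dt_cr_left (x y) : dt x (cr x y) = 0 := by
  rw [← dt_cr, cr_self, dt_zero_left]
theorem dt_cr_right (x y) : dt y (cr x y) = 0 := by
  rw [cr_anti, dt_neg_right, dt_cr_left, neg_zero]
theorem cr_cr (x y) : cr x (cr x y) = (- dt x x) • y + dt x y • x := by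
  apply ext7 <;>
  simp only [Pi.add_apply, Pi.smul_apply, smul_eq_mul, dt, cr0, cr1, cr2, cr3, cr4, cr5, cr6] <;> ring

theorem dt_eq (x y : Fin 7 → ℝ) : x ⬝ᵥ y = dt x y := by
  simp [dotProduct, Fin.sum_univ_succ, dt]; ring_nf; try rfl

/-- G2 triple -/
structure Tri (a b c : Fin 7 → ℝ) : Prop where
  aa : dt a a = 1
  bb : dt b b = 1
  cc : dt c c = 1
  ab : dt a b = 0
  ac : dt a c = 0
  bc : dt b c = 0
  abc : dt (cr a b) c = 0

def Fm (a b c : Fin 7 → ℝ) : Matrix (Fin 7) (Fin 7) ℝ :=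
  (Matrix.of ![a, b, cr a b, c, cr a c, cr b c, cr a (cr b c)])ᵀ

theorem Fm_mulVec (a b c x) : (Fm a b c).mulVec x =
   x 0 • a + x 1 • b + x 2 • cr a b + x 3 • c + x 4 • cr a c + x 5 • cr b c + x 6 • cr a (cr b c) := by
  funext i
  simp [Fm, Matrix.mulVec, dotProduct, Fin.sum_univ_succ]
  ring_nf; try rfl

/-- multiplication table -/
structure Tab (f1 f2 f3 f4 f5 f6 f7 : Fin 7 → ℝ) : Prop where
  t12 : cr f1 f2 = f3
  t13 : cr f1 f3 = -f2
  t14 : cr f1 f4 = f5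
  t15 : cr f1 f5 = -f4
  t16 : cr f1 f6 = f7
  t17 : cr f1 f7 = -f6
  t23 : cr f2 f3 = f1
  t24 : cr f2 f4 = f6
  t25 : cr f2 f5 = -f7
  t26 : cr f2 f6 = -f4
  t27 : cr f2 f7 = f5
  t34 : cr f3 f4 = -f7
  t35 : cr f3 f5 = -f6
  t36 : cr f3 f6 = f5
  t37 : cr f3 f7 = f4
  t45 : cr f4 f5 = f1
  t46 : cr f4 f6 = f2
  t47 : cr f4 f7 = -f3
  t56 : cr f5 f6 = -f3
  t57 : cr f5 f7 = -f2
  t67 : cr f6 f7 = f1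

/-- orthonormality -/
structure Orth (f1 f2 f3 f4 f5 f6 f7 : Fin 7 → ℝ) : Prop where
  o11 : dt f1 f1 = 1
  o22 : dt f2 f2 = 1
  o33 : dt f3 f3 = 1
  o44 : dt f4 f4 = 1
  o55 : dt f5 f5 = 1
  o66 : dt f6 f6 = 1
  o77 : dt f7 f7 = 1
  o12 : dt f1 f2 = 0
  o13 : dt f1 f3 = 0
  o14 : dt f1 f4 = 0
  o15 : dt f1 f5 = 0
  o16 : dt f1 f6 = 0
  o17 : dt f1 f7 = 0
  o23 : dt f2 f3 = 0
  o24 : dt f2 f4 = 0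
  o25 : dt f2 f5 = 0
  o26 : dt f2 f6 = 0
  o27 : dt f2 f7 = 0
  o34 : dt f3 f4 = 0
  o35 : dt f3 f5 = 0
  o36 : dt f3 f6 = 0
  o37 : dt f3 f7 = 0
  o45 : dt f4 f5 = 0
  o46 : dt f4 f6 = 0
  o47 : dt f4 f7 = 0
  o56 : dt f5 f6 = 0
  o57 : dt f5 f7 = 0
  o67 : dt f6 f7 = 0

/-- anticommutation for orthogonal vectors -/
theorem cr_swap {x y z : Fin 7 → ℝ} (h1 : dt x y = 0) (h2 : dt x z = 0) (h3 : dt y z = 0) :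
    cr x (cr y z) = - cr y (cr x z) := by
  have := cr_lin x y z
  rw [h1, h2, h3] at this
  simp only [mul_zero, zero_smul, add_zero] at this
  exact eq_neg_of_add_eq_zero_left this

theorem cr_cr1 {x y : Fin 7 → ℝ} (h1 : dt x x = 1) (h2 : dt x y = 0) : cr x (cr x y) = -y := by
  rw [cr_cr, h1, h2]; simp

theorem dt_cr_cr {x y : Fin 7 → ℝ} (h1 : dt x x = 1) (h2 : dt x y = 0) :
    dt (cr x y) (cr x y) = dt y y := by
  have : dt (cr x y) (cr x y) = - dt (cr y x) (cr x y) := by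
    rw [← dt_neg_left, ← cr_anti]
  rw [this, dt_cr, cr_cr1 h1 h2, dt_neg_right, neg_neg]

theorem Tri.o_abbc {a b c} (h : Tri a b c) : dt (cr a b) (cr b c) = 0 := by
  rw [dt_cr, cr_cr1 h.bb h.bc, dt_neg_right, h.ac, neg_zero]
theorem Tri.o_abc {a b c} (h : Tri a b c) : dt a (cr b c) = 0 := by
  rw [← dt_cr, h.abc]
theorem Tri.o_bac {a b c} (h : Tri a b c) : dt b (cr a c) = 0 := by
  rw [← dt_cr, cr_anti, dt_neg_left, h.abc, neg_zero]
theorem Tri.ccb {a b c} (h : Tri a b c) : cr c (cr b c) = b := by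
  rw [cr_anti b c, cr_neg_right, cr_cr1 h.cc (by rw [dt_comm, h.bc]), neg_neg]
theorem Tri.cca {a b c} (h : Tri a b c) : cr c (cr a c) = a := by
  rw [cr_anti a c, cr_neg_right, cr_cr1 h.cc (by rw [dt_comm, h.ac]), neg_neg]
theorem Tri.o_acbc {a b c} (h : Tri a b c) : dt (cr a c) (cr b c) = 0 := by
  rw [dt_cr, h.ccb, h.ab]

theorem Tri.tab {a b c} (h : Tri a b c) :
    Tab a b (cr a b) c (cr a c) (cr b c) (cr a (cr b c)) := by
  have t17 := cr_cr1 h.aa h.o_abc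
  have t25 : cr b (cr a c) = - cr a (cr b c) :=
    cr_swap (by rw [dt_comm, h.ab]) h.bc h.ac
  have t26 := cr_cr1 h.bb h.bc
  have t27 : cr b (cr a (cr b c)) = cr a c := by
    rw [cr_swap (by rw [dt_comm, h.ab]) (dt_cr_left _ _) h.o_abc, t26, cr_neg_right, neg_neg]
  have t34 : cr (cr a b) c = - cr a (cr b c) := by
    rw [cr_anti, cr_swap (by rw [dt_comm, h.ac]) (by rw [dt_comm, h.bc]) h.ab,
      cr_anti c b, cr_neg_right]; simp
  have t15 := cr_cr1 h.aa h.ac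
  have t35 : cr (cr a b) (cr a c) = - cr b c := by
    rw [cr_swap (by rw [dt_comm, dt_cr_left]) h.abc h.ac, t34, cr_neg_right, t17]; simp
  have t36 : cr (cr a b) (cr b c) = cr a c := by
    rw [cr_swap (by rw [dt_comm, dt_cr_right]) h.abc h.bc, t34, cr_neg_right, t27]; simp
  have t56 : cr (cr a c) (cr b c) = - cr a b := by
    rw [cr_swap (by rw [dt_comm, h.o_bac]) (by rw [dt_comm, dt_cr_right]) h.bc,
      cr_anti (cr a c) c, h.cca, cr_neg_right, cr_anti b a]; simp
  have t13 := cr_cr1 h.aa h.ab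
  refine ⟨rfl, t13, rfl, t15, rfl, t17, ?_, rfl, t25, t26, t27, t34, t35, t36, ?_,
    h.cca, h.ccb, ?_, t56, ?_, ?_⟩
  · rw [cr_anti a b, cr_neg_right, cr_cr1 h.bb (by rw [dt_comm, h.ab]), neg_neg]
  · rw [cr_swap (by rw [dt_comm, dt_cr_left]) h.o_abbc h.o_abc, t36, t15, neg_neg]
  · rw [cr_swap (by rw [dt_comm, h.ac]) (dt_cr_right _ _) h.o_abc, h.ccb]
  · rw [cr_swap (by rw [dt_comm, dt_cr_left]) h.o_acbc h.o_abc, t56, cr_neg_right, t13]; simp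
  · rw [cr_anti a, cr_neg_right, cr_cr1 (by rw [dt_cr_cr h.bb h.bc, h.cc])
      (by rw [dt_comm, h.o_abc]), neg_neg]

theorem Tri.orth {a b c} (h : Tri a b c) :
    Orth a b (cr a b) c (cr a c) (cr b c) (cr a (cr b c)) := by
  have t := h.tab
  have o66 : dt (cr b c) (cr b c) = 1 := by rw [dt_cr_cr h.bb h.bc, h.cc]
  refine ⟨h.aa, h.bb, ?_, h.cc, ?_, o66, ?_, h.ab, dt_cr_left _ _, h.ac, dt_cr_left _ _,
    h.o_abc, dt_cr_left _ _, dt_cr_right _ _, h.bc, h.o_bac, dt_cr_left _ _, ?_,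
    h.abc, ?_, h.o_abbc, ?_, dt_cr_right _ _, dt_cr_right _ _, ?_, h.o_acbc, ?_, dt_cr_right _ _⟩
  · rw [dt_cr_cr h.aa h.ab, h.bb]
  · rw [dt_cr_cr h.aa h.ac, h.cc]
  · rw [dt_cr_cr h.aa h.o_abc, o66]
  · rw [← dt_cr, cr_anti, dt_neg_left, h.o_abbc, neg_zero]
  · rw [dt_cr, t.t25, dt_neg_right, dt_cr_left, neg_zero]
  · rw [dt_cr, t.t27, dt_cr_left]
  · rw [← dt_cr, cr_anti, dt_neg_left, h.o_acbc, neg_zero]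
  · rw [dt_cr, t.t47, dt_neg_right, dt_cr_left, neg_zero]

theorem Tab.comb {f1 f2 f3 f4 f5 f6 f7} (t : Tab f1 f2 f3 f4 f5 f6 f7) (x y : Fin 7 → ℝ) :
    cr (x 0 • f1 + x 1 • f2 + x 2 • f3 + x 3 • f4 + x 4 • f5 + x 5 • f6 + x 6 • f7)
      (y 0 • f1 + y 1 • f2 + y 2 • f3 + y 3 • f4 + y 4 • f5 + y 5 • f6 + y 6 • f7) =
    cr x y 0 • f1 + cr x y 1 • f2 + cr x y 2 • f3 + cr x y 3 • f4 + cr x y 4 • f5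
      + cr x y 5 • f6 + cr x y 6 • f7 := by
  simp only [cr_add_left, cr_add_right, cr_smul_left, cr_smul_right, cr_self]
  simp only [cr_anti f2 f1, cr_anti f3 f1, cr_anti f4 f1, cr_anti f5 f1, cr_anti f6 f1,
    cr_anti f7 f1, cr_anti f3 f2, cr_anti f4 f2, cr_anti f5 f2, cr_anti f6 f2, cr_anti f7 f2,
    cr_anti f4 f3, cr_anti f5 f3, cr_anti f6 f3, cr_anti f7 f3, cr_anti f5 f4, cr_anti f6 f4,
    cr_anti f7 f4, cr_anti f6 f5, cr_anti f7 f5, cr_anti f7 f6,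
    t.t12, t.t13, t.t14, t.t15, t.t16, t.t17, t.t23, t.t24, t.t25, t.t26, t.t27,
    t.t34, t.t35, t.t36, t.t37, t.t45, t.t46, t.t47, t.t56, t.t57, t.t67,
    cr0, cr1, cr2, cr3, cr4, cr5, cr6]
  module

theorem Orth.comb {f1 f2 f3 f4 f5 f6 f7} (t : Orth f1 f2 f3 f4 f5 f6 f7) (x y : Fin 7 → ℝ) :
    dt (x 0 • f1 + x 1 • f2 + x 2 • f3 + x 3 • f4 + x 4 • f5 + x 5 • f6 + x 6 • f7)
      (y 0 • f1 + y 1 • f2 + y 2 • f3 + y 3 • f4 + y 4 • f5 + y 5 • f6 + y 6 • f7) = dt x y := by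
  simp only [dt_add_left, dt_add_right, dt_smul_left, dt_smul_right]
  simp only [dt_comm f2 f1, dt_comm f3 f1, dt_comm f4 f1, dt_comm f5 f1, dt_comm f6 f1,
    dt_comm f7 f1, dt_comm f3 f2, dt_comm f4 f2, dt_comm f5 f2, dt_comm f6 f2, dt_comm f7 f2,
    dt_comm f4 f3, dt_comm f5 f3, dt_comm f6 f3, dt_comm f7 f3, dt_comm f5 f4, dt_comm f6 f4,
    dt_comm f7 f4, dt_comm f6 f5, dt_comm f7 f5, dt_comm f7 f6,
    t.o12, t.o13, t.o14, t.o15, t.o16, t.o17, t.o23, t.o24, t.o25, t.o26, t.o27,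
    t.o34, t.o35, t.o36, t.o37, t.o45, t.o46, t.o47, t.o56, t.o57, t.o67,
    t.o11, t.o22, t.o33, t.o44, t.o55, t.o66, t.o77]
  simp only [dt]
  ring

theorem Tri.cr_map {a b c} (h : Tri a b c) (x y) :
    cr ((Fm a b c).mulVec x) ((Fm a b c).mulVec y) = (Fm a b c).mulVec (cr x y) := by
  simp only [Fm_mulVec]; exact h.tab.comb x y

theorem Tri.dt_map {a b c} (h : Tri a b c) (x y) :
    dt ((Fm a b c).mulVec x) ((Fm a b c).mulVec y) = dt x y := by
  simp only [Fm_mulVec]; exact h.orth.comb x y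

theorem Tri.phi_map {a b c} (h : Tri a b c) (x y z) :
    phi ((Fm a b c).mulVec x) ((Fm a b c).mulVec y) ((Fm a b c).mulVec z) = phi x y z := by
  rw [phi_eq, phi_eq, h.cr_map, h.dt_map]

theorem orth_of_dt {M : Matrix (Fin 7) (Fin 7) ℝ}
    (h : ∀ x y, dt (M.mulVec x) (M.mulVec y) = dt x y) : Mᵀ * M = 1 := by
  ext i j
  have := h (Pi.single i 1) (Pi.single j 1)
  rw [← dt_eq, ← dt_eq] at this
  simp only [Matrix.mulVec_single_one, single_one_dotProduct] at this
  rw [Pi.single_apply] at this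
  rw [Matrix.mul_apply, Matrix.one_apply]
  exact this

theorem Tri.trans {a b c} (h : Tri a b c) : (Fm a b c)ᵀ * Fm a b c = 1 := orth_of_dt h.dt_map

theorem Fm_e0 (a b c) : (Fm a b c).mulVec (e 0) = a := by
  rw [Fm_mulVec]; simp [e]

theorem exists_eig (S : Matrix (Fin 7) (Fin 7) ℝ)
    (hS : ∀ x y, dt (S.mulVec x) y = dt x (S.mulVec y)) (p q r : Fin 7 → ℝ)
    (hinv : ∀ x, dt p x = 0 → dt q x = 0 → dt r x = 0 →
      dt p (S.mulVec x) = 0 ∧ dt q (S.mulVec x) = 0 ∧ dt r (S.mulVec x) = 0) :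
    ∃ (x : Fin 7 → ℝ) (l : ℝ), dt x x = 1 ∧ dt p x = 0 ∧ dt q x = 0 ∧ dt r x = 0 ∧
      S.mulVec x = l • x := by
  let E := EuclideanSpace ℝ (Fin 7)
  let T : E →ₗ[ℝ] E := Matrix.toEuclideanLin S
  let P : E →ₗ[ℝ] (Fin 3 → ℝ) :=
    (Matrix.mulVecLin (Matrix.of ![p, q, r])).comp (WithLp.linearEquiv 2 ℝ (Fin 7 → ℝ)).toLinearMap
  have hP : ∀ v : E, v ∈ LinearMap.ker P ↔
      dt p v.ofLp = 0 ∧ dt q v.ofLp = 0 ∧ dt r v.ofLp = 0 := by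
    intro v
    rw [LinearMap.mem_ker]
    simp only [P, LinearMap.comp_apply, Matrix.mulVecLin_apply, funext_iff, Fin.forall_fin_succ,
      Matrix.mulVec, ← dt_eq]
    simp
    exact Iff.rfl
  have hin : ∀ x y : E, inner ℝ x y = dt x.ofLp y.ofLp := by
    intro x y
    rw [← dt_eq, EuclideanSpace.inner_eq_star_dotProduct, dotProduct_comm]; rfl
  have hT : T.IsSymmetric := by
    intro x y
    rw [hin, hin]
    exact hS _ _
  have hW : ∀ v ∈ LinearMap.ker P, T v ∈ LinearMap.ker P := by
    intro v hv
    rw [hP] at hv ⊢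
    exact hinv _ hv.1 hv.2.1 hv.2.2
  have hne : LinearMap.ker P ≠ ⊥ := by
    apply LinearMap.ker_ne_bot_of_finrank_lt
    simp [E]
  have : Nontrivial (LinearMap.ker P) := Submodule.nontrivial_iff_ne_bot.mpr hne
  have hs := hT.restrict_invariant hW
  obtain ⟨v, hv⟩ := hs.hasEigenvalue_iSup_of_finiteDimensional.exists_hasEigenvector
  have h1 := hv.apply_eq_smul
  have h2 := hv.2
  generalize (⨆ x : { x : LinearMap.ker P // x ≠ 0 }, _ : ℝ) = l at h1
  obtain ⟨v, hv'⟩ := v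
  have h3 : T v = l • v := congrArg Subtype.val h1
  have h4 : v ≠ 0 := fun h => h2 (Subtype.ext h)
  have h5 : S.mulVec v.ofLp = l • v.ofLp := congrArg WithLp.ofLp h3
  rw [hP] at hv'
  have h6 : dt v.ofLp v.ofLp = ‖v‖ ^ 2 := by rw [← hin, real_inner_self_eq_norm_sq]
  have h7 : ‖v‖ ≠ 0 := norm_ne_zero_iff.mpr h4
  refine ⟨‖v‖⁻¹ • v.ofLp, l, ?_, ?_, ?_, ?_, ?_⟩
  · rw [dt_smul_left, dt_smul_right, h6]; field_simp
  · rw [dt_smul_right, hv'.1, mul_zero]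
  · rw [dt_smul_right, hv'.2.1, mul_zero]
  · rw [dt_smul_right, hv'.2.2, mul_zero]
  · rw [Matrix.mulVec_smul, h5, smul_comm]

theorem exists_tri (a : Fin 7 → ℝ) (h : dt a a = 1) : ∃ b c, Tri a b c := by
  obtain ⟨b, _, h1, h2, -, -, -⟩ := exists_eig 0 (by intros; simp [dt]) a a a
    (by intros; simp [dt])
  obtain ⟨c, _, h3, h4, h5, h6, -⟩ := exists_eig 0 (by intros; simp [dt]) a b (cr a b)
    (by intros; simp [dt])
  exact ⟨b, c, h, h1, h3, h2, h4, h5, h6⟩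

/-- membership in `𝔤₂` -/
structure G2m (A : Matrix (Fin 7) (Fin 7) ℝ) : Prop where
  skew : ∀ i j, A j i = - A i j
  g : ∀ i : Fin 7, ∑ j : Fin 7, ∑ k : Fin 7, eps i j k * A j k = 0

theorem G2m.der {A} (h : G2m A) (x y : Fin 7 → ℝ) :
    A.mulVec (cr x y) = cr (A.mulVec x) y + cr x (A.mulVec y) := by
  have s := h.skew
  have d : ∀ i, A i i = 0 := fun i => by linarith [s i i]
  have g := h.g
  have g0 := g 0
  have g1 := g 1
  have g2 := g 2
  have g3 := g 3
  have g4 := g 4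
  have g5 := g 5
  have g6 := g 6
  simp [Fin.sum_univ_seven, eps, phi, w3, e] at g0 g1 g2 g3 g4 g5 g6
  simp only [s 0 1, s 0 2, s 0 3, s 0 4, s 0 5, s 0 6, s 1 2, s 1 3, s 1 4, s 1 5, s 1 6, s 2 3,
    s 2 4, s 2 5, s 2 6, s 3 4, s 3 5, s 3 6, s 4 5, s 4 6, s 5 6] at g0 g1 g2 g3 g4 g5 g6
  have k0 : A 1 2 = - A 3 4 - A 5 6 := by linarith
  have k1 : A 0 2 = A 3 5 - A 4 6 := by linarith
  have k2 : A 0 1 = A 3 6 + A 4 5 := by linarith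
  have k3 : A 0 4 = A 2 6 - A 1 5 := by linarith
  have k4 : A 0 3 = - A 1 6 - A 2 5 := by linarith
  have k5 : A 0 6 = A 1 3 - A 2 4 := by linarith
  have k6 : A 0 5 = A 1 4 + A 2 3 := by linarith
  have mv : ∀ z i, A.mulVec z i = A i 0 * z 0 + A i 1 * z 1 + A i 2 * z 2 + A i 3 * z 3
     + A i 4 * z 4 + A i 5 * z 5 + A i 6 * z 6 := by
    intro z i; simp [Matrix.mulVec, dotProduct, Fin.sum_univ_seven]
  apply ext7 <;> simp only [Pi.add_apply, mv, cr0, cr1, cr2, cr3, cr4, cr5, cr6, d,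
    s 0 1, s 0 2, s 0 3, s 0 4, s 0 5, s 0 6, s 1 2, s 1 3, s 1 4, s 1 5, s 1 6, s 2 3,
    s 2 4, s 2 5, s 2 6, s 3 4, s 3 5, s 3 6, s 4 5, s 4 6, s 5 6, k0, k1, k2, k3, k4, k5, k6] <;>
  ring

theorem G2m.dtA {A} (h : G2m A) (x y : Fin 7 → ℝ) :
    dt (A.mulVec x) y = - dt x (A.mulVec y) := by
  have : Aᵀ = -A := by ext i j; exact h.skew i j
  rw [← dt_eq, ← dt_eq, Matrix.dotProduct_mulVec, ← Matrix.mulVec_transpose, this,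
    Matrix.neg_mulVec, neg_dotProduct, neg_neg]

theorem G2m.ker {A} (h : G2m A) : ∃ a, dt a a = 1 ∧ A.mulVec a = 0 := by
  have : Aᵀ = -A := by ext i j; exact h.skew i j
  have hd : A.det = 0 := by
    have := congrArg Matrix.det this
    rw [Matrix.det_transpose, Matrix.det_neg] at this
    simp at this
    norm_num at this
    linarith
  obtain ⟨v, hv, hv2⟩ := Matrix.exists_mulVec_eq_zero_iff.mpr hd
  have hp : 0 < dt v v := by
    rw [← dt_eq]
    exact lt_of_le_of_ne (Finset.sum_nonneg fun i _ => mul_self_nonneg (v i)) (fun h => hv (dotProduct_self_eq_zero.mp h.symm))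
  refine ⟨(Real.sqrt (dt v v))⁻¹ • v, ?_, by rw [Matrix.mulVec_smul, hv2, smul_zero]⟩
  have := Real.mul_self_sqrt hp.le
  have h2 := (Real.sqrt_pos.mpr hp).ne'
  rw [dt_smul_left, dt_smul_right]
  field_simp
  nlinarith

def Fr (A : Matrix (Fin 7) (Fin 7) ℝ) (l m : ℝ) : Prop :=
  ∃ a b c, Tri a b c ∧ A.mulVec a = 0 ∧ A.mulVec b = l • cr a b ∧ A.mulVec c = m • cr a c

/-- matrix of `x ↦ a × x` -/
def crM (a : Fin 7 → ℝ) : Matrix (Fin 7) (Fin 7) ℝ :=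
  Matrix.of fun i j => cr a (e j) i

theorem crM_mulVec (a x) : (crM a).mulVec x = cr a x := by
  apply ext7 <;>
    simp [crM, Matrix.mulVec, dotProduct, Fin.sum_univ_seven, cr0, cr1, cr2, cr3, cr4, cr5, cr6, e] <;>
    ring

theorem G2m.fr {A} (h : G2m A) : ∃ l m, Fr A l m := by
  obtain ⟨a, ha, hA⟩ := h.ker
  have hJ : ∀ x, A.mulVec (cr a x) = cr a (A.mulVec x) := by
    intro x; rw [h.der, hA, cr_zero_left, zero_add]
  have hAa : ∀ x, dt a (A.mulVec x) = 0 := by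
    intro x
    have := h.dtA a x
    rw [hA, dt_zero_left] at this
    linarith
  let S := crM a * A
  have hSx : ∀ x, S.mulVec x = cr a (A.mulVec x) := by
    intro x; rw [← crM_mulVec, Matrix.mulVec_mulVec]
  have hS : ∀ x y, dt (S.mulVec x) y = dt x (S.mulVec y) := by
    intro x y
    rw [hSx, hSx, ← hJ x, h.dtA, cr_anti a x, dt_neg_left, neg_neg, dt_cr]
  have key : ∀ x (l : ℝ), dt a x = 0 → S.mulVec x = l • x → A.mulVec x = (-l) • cr a x := by
    intro x l h1 h2
    rw [hSx] at h2
    have h3 := congrArg (cr a) h2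
    rw [cr_cr1 ha (hAa x), cr_smul_right] at h3
    rw [neg_smul, ← h3, neg_neg]
  obtain ⟨b, l, hb, hab, -, -, hl⟩ := exists_eig S hS a a a (by
    intro x _ _ _
    rw [hSx]; simp [dt_cr_left])
  have hb2 := key b l hab hl
  have hSab : S.mulVec (cr a b) = l • cr a b := by
    rw [hSx, hJ, ← hSx, hl, cr_smul_right]
  obtain ⟨c, m, hc, hac, hbc, habc, hm⟩ := exists_eig S hS a b (cr a b) (by
    intro x h1 h2 h3
    refine ⟨?_, ?_, ?_⟩
    · rw [hSx, dt_cr_left]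
    · rw [← hS, hl, dt_smul_left, h2, mul_zero]
    · rw [← hS, hSab, dt_smul_left, h3, mul_zero])
  exact ⟨-l, -m, a, b, c, ⟨ha, hb, hc, hab, hac, hbc, habc⟩, hA, hb2, key c m hac hm⟩

theorem Fr.swap {A l m} (h : Fr A l m) : Fr A m l := by
  obtain ⟨a, b, c, t, h1, h2, h3⟩ := h
  exact ⟨a, c, b, ⟨t.aa, t.cc, t.bb, t.ac, t.ab, by rw [dt_comm, t.bc],
    by rw [dt_comm, t.o_bac]⟩, h1, h3, h2⟩

theorem Fr.neg {A l m} (h : Fr A l m) : Fr A (-l) (-m) := by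
  obtain ⟨a, b, c, t, h1, h2, h3⟩ := h
  refine ⟨-a, b, c, ⟨?_, t.bb, t.cc, ?_, ?_, t.bc, ?_⟩, ?_, ?_, ?_⟩ <;>
    simp [dt_neg_left, dt_neg_right, cr_neg_left, t.aa, t.ab, t.ac, t.abc, Matrix.mulVec_neg, h1, h2, h3]

theorem fr_bc {A} (hA : G2m A) {a b c} {l m : ℝ} (t : Tri a b c)
    (h2 : A.mulVec b = l • cr a b) (h3 : A.mulVec c = m • cr a c) :
    A.mulVec (cr b c) = (-l - m) • cr a (cr b c) := by
  rw [hA.der, h2, h3, cr_smul_left, cr_smul_right, t.tab.t34, t.tab.t25]; module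

theorem Fr.third {A l m} (hA : G2m A) (h : Fr A l m) : Fr A l (-l - m) := by
  obtain ⟨a, b, c, t, h1, h2, h3⟩ := h
  exact ⟨a, b, cr b c, ⟨t.aa, t.bb, t.orth.o66, t.ab, t.o_abc, dt_cr_left _ _,
    t.o_abbc⟩, h1, h2, fr_bc hA t h2 h3⟩

/-- normal form -/
def NN (l m n : ℝ) (x y : Fin 7 → ℝ) : ℝ :=
  l * (x 1 * y 2 - x 2 * y 1) + m * (x 3 * y 4 - x 4 * y 3) + n * (x 5 * y 6 - x 6 * y 5)

theorem fr_nf {A} (hA : G2m A) {a b c} {l m : ℝ} (t : Tri a b c) (h1 : A.mulVec a = 0)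
    (h2 : A.mulVec b = l • cr a b) (h3 : A.mulVec c = m • cr a c) (x y) :
    dt ((Fm a b c).mulVec x) (A.mulVec ((Fm a b c).mulVec y)) = NN (-l) (-m) (l + m) x y := by
  have h4 := fr_bc hA t h2 h3
  have hJ : ∀ x, A.mulVec (cr a x) = cr a (A.mulVec x) := by
    intro x; rw [hA.der, h1, cr_zero_left, zero_add]
  have o := t.orth
  have h5 : A.mulVec ((Fm a b c).mulVec y) =
    (Fm a b c).mulVec ![0, -l * y 2, l * y 1, - m * y 4, m * y 3, (l + m) * y 6, -(l+m) * y 5] := by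
    simp only [Fm_mulVec, Matrix.mulVec_add, Matrix.mulVec_smul, hJ, h1, h2, h3, h4, cr_smul_right,
      t.tab.t13, t.tab.t15, t.tab.t17]
    simp
    module
  rw [h5, t.dt_map]
  simp [dt, NN]
  ring

section cube
variable (v : Fin 6 → Fin 7 → ℝ)

/-- signed sum of products -/
def DD (j : Fin 6 → Fin 7) : ℝ := ∑ σ : Equiv.Perm (Fin 6), ((Equiv.Perm.sign σ : ℤ) : ℝ) *
  (v (σ 0) (j 0) * v (σ 1) (j 1) * v (σ 2) (j 2) * v (σ 3) (j 3) * v (σ 4) (j 4) * v (σ 5) (j 5))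

theorem DD_det (j) : DD v j = Matrix.det (Matrix.of fun a b => v a (j b)) := by
  rw [Matrix.det_apply', DD]
  refine Finset.sum_congr rfl fun σ _ => ?_
  rw [Fin.prod_univ_six]; rfl

theorem DD_zero (j) {p q} (h : p ≠ q) (hj : j p = j q) : DD v j = 0 := by
  rw [DD_det]
  exact Matrix.det_zero_of_column_eq h (fun i => by simp [hj])

theorem DD_perm (j) (τ : Equiv.Perm (Fin 6)) :
    DD v (fun i => j (τ i)) = ((Equiv.Perm.sign τ : ℤ) : ℝ) * DD v j := by
  rw [DD_det, DD_det, ← Matrix.det_permute']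
  rfl

/-- half of the normal form -/
def BB (c : Fin 3 → ℝ) (x y : Fin 7 → ℝ) : ℝ :=
  c 0 * (x 1 * y 2) + c 1 * (x 3 * y 4) + c 2 * (x 5 * y 6)

theorem NN_eq (l m n x y) : NN l m n x y = BB ![l, m, n] x y - BB ![l, m, n] y x := by
  simp [NN, BB]; ring

def SS (F : Equiv.Perm (Fin 6) → ℝ) : ℝ :=
  ∑ σ : Equiv.Perm (Fin 6), ((Equiv.Perm.sign σ : ℤ) : ℝ) * F σ

theorem SS_swap (F : Equiv.Perm (Fin 6) → ℝ) {i j : Fin 6} (h : i ≠ j) :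
    SS (fun σ => F (σ * Equiv.swap i j)) = - SS F := by
  unfold SS
  rw [← Finset.sum_neg_distrib]
  refine Fintype.sum_equiv (Equiv.mulRight (Equiv.swap i j)) _ _ fun σ => ?_
  simp [Equiv.Perm.sign_swap h]

theorem SS_sub (F G : Equiv.Perm (Fin 6) → ℝ) : SS (fun σ => F σ - G σ) = SS F - SS G := by
  simp [SS, mul_sub]

theorem SS_B (c : Fin 3 → ℝ) :
    SS (fun σ => BB c (v (σ 0)) (v (σ 1)) * BB c (v (σ 2)) (v (σ 3)) * BB c (v (σ 4)) (v (σ 5))) =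
    6 * (c 0 * c 1 * c 2) * DD v Fin.succ := by
  let p : Fin 3 → Fin 7 := ![1, 3, 5]
  let q : Fin 3 → Fin 7 := ![2, 4, 6]
  let J : Fin 3 → Fin 3 → Fin 3 → Fin 6 → Fin 7 := fun a b d => ![p a, q a, p b, q b, p d, q d]
  have h1 : SS (fun σ => BB c (v (σ 0)) (v (σ 1)) * BB c (v (σ 2)) (v (σ 3)) *
      BB c (v (σ 4)) (v (σ 5))) = ∑ a, ∑ b, ∑ d, c a * c b * c d * DD v (J a b d) := by
    simp only [DD, SS, Fin.sum_univ_three, Finset.mul_sum, ← Finset.sum_add_distrib]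
    refine Finset.sum_congr rfl fun σ _ => ?_
    simp only [J, p, q, BB]
    simp
    ring
  have z1 : ∀ a d, DD v (J a a d) = 0 := fun a d =>
    DD_zero v _ (p := 0) (q := 2) (by decide) rfl
  have z2 : ∀ a d, DD v (J a d a) = 0 := fun a d =>
    DD_zero v _ (p := 0) (q := 4) (by decide) rfl
  have z3 : ∀ a d, DD v (J d a a) = 0 := fun a d =>
    DD_zero v _ (p := 2) (q := 4) (by decide) rfl
  have s12 : ∀ a b d, DD v (J a b d) = DD v (J b a d) := by
    intro a b d
    have := DD_perm v (J b a d) (Equiv.swap 0 2 * Equiv.swap 1 3)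
    rw [Equiv.Perm.sign_mul, Equiv.Perm.sign_swap (by decide),
      Equiv.Perm.sign_swap (by decide)] at this
    simp only [neg_mul_neg, one_mul, Units.val_one, Int.cast_one] at this
    rw [← this]
    congr 1
    funext i; fin_cases i <;> rfl
  have s23 : ∀ a b d, DD v (J a b d) = DD v (J a d b) := by
    intro a b d
    have := DD_perm v (J a d b) (Equiv.swap 2 4 * Equiv.swap 3 5)
    rw [Equiv.Perm.sign_mul, Equiv.Perm.sign_swap (by decide),
      Equiv.Perm.sign_swap (by decide)] at this
    simp only [neg_mul_neg, one_mul, Units.val_one, Int.cast_one] at this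
    rw [← this]
    congr 1
    funext i; fin_cases i <;> rfl
  have s0 : DD v (J 0 1 2) = DD v Fin.succ := by
    congr 1
    funext i; fin_cases i <;> rfl
  rw [h1]
  simp only [Fin.sum_univ_three, z1, z2, z3]
  rw [s12 2 1 0, s23 1 2 0, s12 1 0 2, s12 2 0 1, s23 0 2 1, s0]
  ring

theorem SS_N (l m n : ℝ) :
    SS (fun σ => NN l m n (v (σ 0)) (v (σ 1)) * NN l m n (v (σ 2)) (v (σ 3)) *
      NN l m n (v (σ 4)) (v (σ 5))) = 48 * (l * m * n) * DD v Fin.succ := by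
  set c : Fin 3 → ℝ := ![l, m, n]
  have hc := SS_B v c
  have hN : ∀ x y, NN l m n x y = BB c x y - BB c y x := NN_eq l m n
  have e1 : ∀ X : Equiv.Perm (Fin 6) → ℝ, (∀ σ, X (σ * Equiv.swap 0 1) = X σ) →
      SS (fun σ => NN l m n (v (σ 0)) (v (σ 1)) * X σ) =
      2 * SS (fun σ => BB c (v (σ 0)) (v (σ 1)) * X σ) := by
    intro X hX
    have := SS_swap (fun σ => BB c (v (σ 0)) (v (σ 1)) * X σ) (i := 0) (j := 1) (by decide)
    simp [hX] at this
    simp only [hN, sub_mul, SS_sub, this]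
    ring
  have e2 : ∀ X : Equiv.Perm (Fin 6) → ℝ, (∀ σ, X (σ * Equiv.swap 2 3) = X σ) →
      SS (fun σ => NN l m n (v (σ 2)) (v (σ 3)) * X σ) =
      2 * SS (fun σ => BB c (v (σ 2)) (v (σ 3)) * X σ) := by
    intro X hX
    have := SS_swap (fun σ => BB c (v (σ 2)) (v (σ 3)) * X σ) (i := 2) (j := 3) (by decide)
    simp [hX] at this
    simp only [hN, sub_mul, SS_sub, this]
    ring
  have e3 : ∀ X : Equiv.Perm (Fin 6) → ℝ, (∀ σ, X (σ * Equiv.swap 4 5) = X σ) →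
      SS (fun σ => NN l m n (v (σ 4)) (v (σ 5)) * X σ) =
      2 * SS (fun σ => BB c (v (σ 4)) (v (σ 5)) * X σ) := by
    intro X hX
    have := SS_swap (fun σ => BB c (v (σ 4)) (v (σ 5)) * X σ) (i := 4) (j := 5) (by decide)
    simp [hX] at this
    simp only [hN, sub_mul, SS_sub, this]
    ring
  have a1 := e1 (fun σ => NN l m n (v (σ 2)) (v (σ 3)) * NN l m n (v (σ 4)) (v (σ 5)))
    (fun σ => rfl)
  have a2 := e2 (fun σ => BB c (v (σ 0)) (v (σ 1)) * NN l m n (v (σ 4)) (v (σ 5)))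
    (fun σ => rfl)
  have a3 := e3 (fun σ => BB c (v (σ 0)) (v (σ 1)) * BB c (v (σ 2)) (v (σ 3)))
    (fun σ => rfl)
  calc _ = SS (fun σ => NN l m n (v (σ 0)) (v (σ 1)) *
            (NN l m n (v (σ 2)) (v (σ 3)) * NN l m n (v (σ 4)) (v (σ 5)))) := by
          congr 1; funext σ; ring
    _ = 2 * SS (fun σ => NN l m n (v (σ 2)) (v (σ 3)) *
          (BB c (v (σ 0)) (v (σ 1)) * NN l m n (v (σ 4)) (v (σ 5)))) := by
          rw [a1]; congr 2; funext σ; ring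
    _ = 2 * (2 * SS (fun σ => NN l m n (v (σ 4)) (v (σ 5)) *
          (BB c (v (σ 0)) (v (σ 1)) * BB c (v (σ 2)) (v (σ 3))))) := by
          rw [a2]; congr 3; funext σ; ring
    _ = 2 * (2 * (2 * SS (fun σ => BB c (v (σ 0)) (v (σ 1)) * BB c (v (σ 2)) (v (σ 3)) *
          BB c (v (σ 4)) (v (σ 5))))) := by
          rw [a3]; congr 4; funext σ; ring
    _ = _ := by
          rw [hc]; simp [c]; ring

theorem wedge_NN (l m n : ℝ) : wedge222 (NN l m n) (NN l m n) (NN l m n) v =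
    6 * (l * m * n) * Matrix.det (Matrix.of fun a b => v a (Fin.succ b)) := by
  have := SS_N v l m n
  rw [DD_det] at this
  unfold wedge222
  unfold SS at this
  rw [this]; ring

end cube

theorem inc_sum (F : Fin 7 → Fin 7 → Fin 7 → Fin 7 → Fin 7 → Fin 7 → ℝ) :
    (∑ a₁ : Fin 7, ∑ a₂ : Fin 7, ∑ a₃ : Fin 7, ∑ a₄ : Fin 7, ∑ a₅ : Fin 7, ∑ a₆ : Fin 7,
    if a₁ < a₂ ∧ a₂ < a₃ ∧ a₃ < a₄ ∧ a₄ < a₅ ∧ a₅ < a₆ then F a₁ a₂ a₃ a₄ a₅ a₆ else 0) =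
    F 1 2 3 4 5 6 + F 0 2 3 4 5 6 + F 0 1 3 4 5 6 + F 0 1 2 4 5 6 + F 0 1 2 3 5 6
      + F 0 1 2 3 4 6 + F 0 1 2 3 4 5 := by
  have h : ∀ (P : Prop) [Decidable P] (f : Fin 7 → ℝ),
      (∑ a, if P then f a else 0) = if P then ∑ a, f a else 0 := by
    intro P _ f; split_ifs <;> simp
  simp only [ite_and, h]
  simp [Fin.sum_univ_seven]
  ring

theorem wedge_comp (A B : (Fin 7 → ℝ) → (Fin 7 → ℝ) → ℝ) (M : (Fin 7 → ℝ) → (Fin 7 → ℝ)) (s : ℝ)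
    (h : ∀ x y, A x y = s * B (M x) (M y)) (v : Fin 6 → Fin 7 → ℝ) :
    wedge222 A A A v = s ^ 3 * wedge222 B B B (fun i => M (v i)) := by
  unfold wedge222
  simp only [h, Finset.mul_sum]
  refine Finset.sum_congr rfl fun σ _ => ?_
  ring

theorem e_single (i : Fin 7) : e i = Pi.single i 1 := by
  funext j; simp [e, Pi.single_apply]

theorem mulVec_e (k : Matrix (Fin 7) (Fin 7) ℝ) (i j : Fin 7) : k.mulVec (e i) j = k j i := by
  rw [e_single]; simp

theorem phi_e0 (x y) : phi (e 0) x y = NN 1 1 1 x y := by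
  simp [phi, w3, e, NN]; try ring

theorem det_k (k : Matrix (Fin 7) (Fin 7) ℝ) (r : ℝ)
    (h : ∀ x y z, phi (k.mulVec x) (k.mulVec y) (k.mulVec z) = phi x y z)
    (h0 : k.mulVec (e 0) = r • e 0) : r ^ 2 * k.det = 1 := by
  have h1 : ∀ x y, NN 1 1 1 x y = r * NN 1 1 1 (k.mulVec x) (k.mulVec y) := by
    intro x y
    rw [← phi_e0, ← h, h0, phi_eq, cr_smul_left, dt_smul_left, ← phi_eq, phi_e0]
  have h2 := wedge_comp _ _ k.mulVec r h1 (fun i => e (Fin.succ i))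
  rw [wedge_NN, wedge_NN] at h2
  have h3 : (Matrix.of fun a b : Fin 6 => e (Fin.succ a) (Fin.succ b)) = 1 := by
    ext a b
    simp [e, Matrix.one_apply, eq_comm]
  have h4 : (Matrix.of fun a b : Fin 6 => k.mulVec (e (Fin.succ a)) (Fin.succ b)) =
      (k.submatrix Fin.succ Fin.succ)ᵀ := by
    ext a b
    simp [mulVec_e]
  rw [h3, h4, Matrix.det_one, Matrix.det_transpose] at h2
  have h5 : ∀ i, k i 0 = if i = 0 then r else 0 := by
    intro i
    have := congrFun h0 i
    rw [mulVec_e] at this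
    rw [this]; simp [e]
  have h6 : k.det = r * (k.submatrix Fin.succ Fin.succ).det := by
    rw [Matrix.det_succ_column_zero, Finset.sum_eq_single 0]
    · simp [h5]
    · intro b _ hb; simp [h5, hb]
    · simp
  rw [h6]
  linarith

theorem phi_inv {G : Matrix (Fin 7) (Fin 7) ℝ} (hG : G * Gᵀ = 1)
    (h : ∀ x y z, phi (G.mulVec x) (G.mulVec y) (G.mulVec z) = phi x y z) (x y z) :
    phi (Gᵀ.mulVec x) (Gᵀ.mulVec y) (Gᵀ.mulVec z) = phi x y z := by
  rw [← h]; simp [Matrix.mulVec_mulVec, hG]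

theorem det_sq {G : Matrix (Fin 7) (Fin 7) ℝ} (hG : Gᵀ * G = 1) : G.det ^ 2 = 1 := by
  have := congrArg Matrix.det hG
  rw [Matrix.det_mul, Matrix.det_transpose, Matrix.det_one] at this
  rw [sq, this]

theorem dt_pos {x : Fin 7 → ℝ} (h : x ≠ 0) : 0 < dt x x := by
  rw [← dt_eq]
  exact lt_of_le_of_ne (Finset.sum_nonneg fun i _ => mul_self_nonneg (x i))
    (fun h' => h (dotProduct_self_eq_zero.mp h'.symm))

theorem phi_scale (h : Matrix (Fin 7) (Fin 7) ℝ) (hd : h.det ≠ 0)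
    (hp : ∀ x y z, phi (h.mulVec x) (h.mulVec y) (h.mulVec z) = phi x y z)
    (x : Fin 7 → ℝ) (hx : dt x x = 1) : |h.det| * dt (h.mulVec x) (h.mulVec x) = 1 := by
  have hx0 : x ≠ 0 := by rintro rfl; simp [dt] at hx
  have hhx : h.mulVec x ≠ 0 := fun h' => hd (Matrix.exists_mulVec_eq_zero_iff.mp ⟨x, hx0, h'⟩)
  have hpos := dt_pos hhx
  set s := Real.sqrt (dt (h.mulVec x) (h.mulVec x)) with hs
  have hs2 : s ^ 2 = dt (h.mulVec x) (h.mulVec x) := Real.sq_sqrt hpos.le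
  have hs0 : 0 < s := Real.sqrt_pos.mpr hpos
  obtain ⟨b, c, t⟩ := exists_tri x hx
  obtain ⟨b', c', t'⟩ := exists_tri (s⁻¹ • h.mulVec x) (by
    rw [dt_smul_left, dt_smul_right, ← hs2]; field_simp)
  set G := Fm x b c
  set G' := Fm (s⁻¹ • h.mulVec x) b' c' with hG'
  have g1 : Gᵀ * G = 1 := t.trans
  have g2 : G'ᵀ * G' = 1 := t'.trans
  have g3 : G' * G'ᵀ = 1 := mul_eq_one_comm.mp g2
  have key := det_k (G'ᵀ * h * G) s (by
    intro u v w
    simp only [← Matrix.mulVec_mulVec]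
    rw [phi_inv g3 t'.phi_map, hp, t.phi_map]) (by
    simp only [← Matrix.mulVec_mulVec]
    rw [show G.mulVec (e 0) = x from Fm_e0 _ _ _]
    have : h.mulVec x = s • G'.mulVec (e 0) := by
      rw [hG', Fm_e0, smul_smul, mul_inv_cancel₀ hs0.ne', one_smul]
    rw [this, Matrix.mulVec_smul, Matrix.mulVec_mulVec, g2, Matrix.one_mulVec])
  rw [Matrix.det_mul, Matrix.det_mul, Matrix.det_transpose] at key
  have d1 := det_sq g1
  have d2 := det_sq g2
  rw [← hs2]
  have : (|h.det| * s ^ 2) ^ 2 = 1 := by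
    rw [mul_pow, sq_abs]
    have : (s ^ 2 * (G'.det * h.det * G.det)) ^ 2 = 1 := by rw [key]; norm_num
    calc h.det ^ 2 * (s ^ 2) ^ 2 = (s ^ 2) ^ 2 * (1 * h.det ^ 2 * 1) := by ring
      _ = (s ^ 2) ^ 2 * (G'.det ^ 2 * h.det ^ 2 * G.det ^ 2) := by rw [d1, d2]
      _ = 1 := by rw [← this]; ring
  have h0 : 0 ≤ |h.det| * s ^ 2 := by positivity
  nlinarith

theorem phi_orth (h : Matrix (Fin 7) (Fin 7) ℝ) (hd : h.det ≠ 0)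
    (hp : ∀ x y z, phi (h.mulVec x) (h.mulVec y) (h.mulVec z) = phi x y z) : hᵀ * h = 1 := by
  set d := |h.det| with hdd
  have hd0 : 0 < d := abs_pos.mpr hd
  have h1 : ∀ x, d * dt (h.mulVec x) (h.mulVec x) = dt x x := by
    intro x
    by_cases hx : x = 0
    · subst hx; simp [dt]
    have hpos := dt_pos hx
    set s := Real.sqrt (dt x x)
    have hs2 : s ^ 2 = dt x x := Real.sq_sqrt hpos.le
    have hs0 : 0 < s := Real.sqrt_pos.mpr hpos
    have := phi_scale h hd hp (s⁻¹ • x) (by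
      rw [dt_smul_left, dt_smul_right, ← hs2]; field_simp)
    rw [Matrix.mulVec_smul, dt_smul_left, dt_smul_right] at this
    field_simp at this
    rw [← hs2, ← this]
  have h2 : ∀ x y, d * dt (h.mulVec x) (h.mulVec y) = dt x y := by
    intro x y
    have a := h1 (x + y)
    simp only [Matrix.mulVec_add, dt_add_left, dt_add_right] at a
    have := h1 x
    have := h1 y
    have c1 := dt_comm y x
    have c2 := dt_comm (h.mulVec y) (h.mulVec x)
    rw [c1, c2] at a
    linarith
  have hr : (Real.sqrt d) * Real.sqrt d = d := Real.mul_self_sqrt hd0.le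
  have h3 : (Real.sqrt d • h)ᵀ * (Real.sqrt d • h) = 1 := by
    apply orth_of_dt
    intro x y
    rw [Matrix.smul_mulVec, Matrix.smul_mulVec, dt_smul_left, dt_smul_right, ← h2 x y, ← mul_assoc, hr]
  have h4 := det_sq h3
  rw [Matrix.det_smul, Fintype.card_fin] at h4
  have h5 : d ^ 9 = 1 := by
    calc d ^ 9 = (Real.sqrt d * Real.sqrt d) ^ 7 * d ^ 2 := by rw [hr]; ring
      _ = (Real.sqrt d * Real.sqrt d) ^ 7 * h.det ^ 2 := by rw [hdd, sq_abs]
      _ = 1 := by rw [← h4]; ring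
  have h6 : d = 1 := (pow_eq_one_iff_of_nonneg hd0.le (by norm_num)).mp h5
  apply orth_of_dt
  intro x y
  rw [← h2 x y, h6, one_mul]

/-- normal form predicate -/
def NF (A : Matrix (Fin 7) (Fin 7) ℝ) (l m n : ℝ) (g : Matrix (Fin 7) (Fin 7) ℝ) : Prop :=
  gᵀ * g = 1 ∧ (∀ x y z, phi (g.mulVec x) (g.mulVec y) (g.mulVec z) = phi x y z) ∧
  ∀ x y, dt (g.mulVec x) (A.mulVec (g.mulVec y)) = NN l m n x y

/-- matrix of a form -/
def Am (α : AlternatingMap ℝ (Fin 7 → ℝ) ℝ (Fin 2)) : Matrix (Fin 7) (Fin 7) ℝ :=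
  Matrix.of fun i j => α ![e i, e j]

theorem alt_anti (α : AlternatingMap ℝ (Fin 7 → ℝ) ℝ (Fin 2)) (x y) : α ![y, x] = - α ![x, y] := by
  have := α.map_swap ![x, y] (i := 0) (j := 1) (by decide)
  rw [← this]
  congr 1
  funext i; fin_cases i <;> rfl

theorem alt_add (α : AlternatingMap ℝ (Fin 7 → ℝ) ℝ (Fin 2)) (x x' y) :
    α ![x + x', y] = α ![x, y] + α ![x', y] :=
  α.toMultilinearMap.cons_add ![y] x x'

theorem alt_smul (α : AlternatingMap ℝ (Fin 7 → ℝ) ℝ (Fin 2)) (c : ℝ) (x y) :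
    α ![c • x, y] = c * α ![x, y] :=
  α.toMultilinearMap.cons_smul ![y] c x

theorem e_expand (x : Fin 7 → ℝ) : x = ∑ i, x i • e i := by
  funext j
  simp [e, Finset.sum_apply]

theorem Am_eq (α : AlternatingMap ℝ (Fin 7 → ℝ) ℝ (Fin 2)) (x y) :
    α ![x, y] = dt x ((Am α).mulVec y) := by
  let L : (Fin 7 → ℝ) →ₗ[ℝ] (Fin 7 → ℝ) →ₗ[ℝ] ℝ := LinearMap.mk₂ ℝ (fun x y => α ![x, y])
    (alt_add α) (alt_smul α)
    (by intro x y z; rw [alt_anti, alt_add, alt_anti α x y, alt_anti α x z]; ring)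
    (by intro c x y; rw [alt_anti, alt_smul, alt_anti α x y]; simp)
  have h : ∀ x y, α ![x, y] = L x y := fun x y => rfl
  rw [h, ← dt_eq]
  conv_lhs => rw [e_expand x, e_expand y]
  simp only [map_sum, LinearMap.sum_apply, map_smul, LinearMap.smul_apply, dotProduct,
    Matrix.mulVec, smul_eq_mul, Finset.mul_sum, Am, Matrix.of_apply, h]
  rw [Finset.sum_comm]
  refine Finset.sum_congr rfl fun i _ => Finset.sum_congr rfl fun j _ => ?_
  ring

theorem Am_g2 (α : AlternatingMap ℝ (Fin 7 → ℝ) ℝ (Fin 2))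
    (hα : ∀ i : Fin 7, ∑ j : Fin 7, ∑ k : Fin 7, eps i j k * α ![e j, e k] = 0) : G2m (Am α) :=
  ⟨fun _ _ => alt_anti α _ _, hα⟩

theorem nf_norm2 {α l m n g} (h : NF (Am α) l m n g) :
    normSq2 α = l ^ 2 + m ^ 2 + n ^ 2 := by
  obtain ⟨h1, -, h3⟩ := h
  have h2 : g * gᵀ = 1 := mul_eq_one_comm.mp h1
  set A := Am α with hA
  have e1 : gᵀ * A * g = Matrix.of fun i j => NN l m n (e i) (e j) := by
    ext i j
    rw [Matrix.of_apply, ← h3, ← dt_eq, e_single, e_single, Matrix.mulVec_single_one, Matrix.mul_assoc,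
      Matrix.mul_apply, Matrix.mulVec_single_one]
    rfl
  have e2 : (A * Aᵀ).trace = 2 * (l ^ 2 + m ^ 2 + n ^ 2) := by
    calc (A * Aᵀ).trace = ((gᵀ * A * g) * (gᵀ * A * g)ᵀ).trace := by
          have : (gᵀ * A * g) * (gᵀ * A * g)ᵀ = gᵀ * (A * (g * gᵀ) * Aᵀ * g) := by
            simp only [Matrix.transpose_mul, Matrix.transpose_transpose, Matrix.mul_assoc]
          rw [this, h2, Matrix.trace_mul_comm gᵀ, Matrix.mul_assoc _ g, h2]; simp
      _ = _ := by
          rw [e1]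
          simp [Matrix.trace, Matrix.mul_apply, Fin.sum_univ_seven, NN, e]
          ring
  have s : ∀ i j, A j i = - A i j := fun i j => alt_anti α _ _
  have dd : ∀ i, A i i = 0 := fun i => by linarith [s i i]
  have e3 : normSq2 α = ∑ a : Fin 7, ∑ b : Fin 7, if a < b then (A a b) ^ 2 else 0 := rfl
  have e4 : (A * Aᵀ).trace = 2 * normSq2 α := by
    rw [e3]
    simp [Matrix.trace, Matrix.mul_apply, Fin.sum_univ_seven, dd,
     s 0 1, s 0 2, s 0 3, s 0 4, s 0 5, s 0 6, s 1 2, s 1 3, s 1 4, s 1 5, s 1 6, s 2 3,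
    s 2 4, s 2 5, s 2 6, s 3 4, s 3 5, s 3 6, s 4 5, s 4 6, s 5 6]
    ring
  linarith

theorem nf_cube {α l m n g} (h : NF (Am α) l m n g) :
    normSqCube α = 36 * (l * m * n) ^ 2 := by
  obtain ⟨h1, -, h3⟩ := h
  have h2 : g * gᵀ = 1 := mul_eq_one_comm.mp h1
  have hn : ∀ x y, α ![x, y] = 1 * NN l m n (gᵀ.mulVec x) (gᵀ.mulVec y) := by
    intro x y
    rw [Am_eq, ← h3]; simp [Matrix.mulVec_mulVec, h2]
  have hadj : g.adjugate = g.det • gᵀ := by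
    have := congrArg (fun M => M * gᵀ) (Matrix.adjugate_mul g)
    simpa [Matrix.mul_assoc, h2] using this
  have hw : ∀ (i : Fin 7) (v : Fin 6 → Fin 7 → ℝ), (v = fun a => e (i.succAbove a)) →
    (wedge222 (fun x y => α ![x, y]) (fun x y => α ![x, y]) (fun x y => α ![x, y]) v) ^ 2
      = 36 * (l * m * n) ^ 2 * g i 0 ^ 2 := by
    rintro i v rfl
    rw [wedge_comp _ _ _ _ hn, wedge_NN]
    have : (Matrix.of fun a b : Fin 6 => gᵀ.mulVec (e (i.succAbove a)) (Fin.succ b)) =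
      g.submatrix i.succAbove (Fin.succAbove 0) := by
      ext a b; simp [mulVec_e]
    rw [this]
    have h5 := Matrix.adjugate_fin_succ_eq_det_submatrix g 0 i
    rw [hadj] at h5
    simp only [Matrix.smul_apply, Matrix.transpose_apply, smul_eq_mul] at h5
    have h6 := congrArg (fun z => z ^ 2) h5
    simp only [mul_pow, det_sq h1, one_mul, ← pow_mul, mul_comm _ 2] at h6
    rw [pow_mul] at h6
    simp only [neg_one_sq, one_pow, one_mul] at h6
    rw [h6]; ring
  unfold normSqCube
  rw [inc_sum (fun a₁ a₂ a₃ a₄ a₅ a₆ => (wedge222 (fun x y => α ![x, y]) (fun x y => α ![x, y])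
    (fun x y => α ![x, y]) ![e a₁, e a₂, e a₃, e a₄, e a₅, e a₆]) ^ 2)]
  rw [hw 0, hw 1, hw 2, hw 3, hw 4, hw 5, hw 6]
  · have h7 := congrFun (congrFun h1 0) 0
    simp [Matrix.mul_apply, Fin.sum_univ_seven] at h7
    linear_combination (36 * (l * m * n) ^ 2) * h7
  all_goals
    funext i; fin_cases i <;> rfl

theorem Fr.nf {A l m} (hA : G2m A) (h : Fr A l m) : ∃ g, NF A (-l) (-m) (l + m) g := by
  obtain ⟨a, b, c, t, h1, h2, h3⟩ := h
  exact ⟨_, t.trans, t.phi_map, fr_nf hA t h1 h2 h3⟩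

theorem Fr.match {A B l m l' m'} (hA : G2m A) (hB : G2m B) (h : Fr A l m) (h' : Fr B l' m')
    (e1 : l ^ 2 + m ^ 2 + (l + m) ^ 2 = l' ^ 2 + m' ^ 2 + (l' + m') ^ 2)
    (e2 : (l * m * (l + m)) ^ 2 = (l' * m' * (l' + m')) ^ 2) : Fr A l' m' := by
  have fin : ∀ k, Fr A l' k → k ^ 2 + l' * k = m' ^ 2 + l' * m' → Fr A l' m' := by
    intro k hk hq
    have : (m' - k) * (m' + k + l') = 0 := by linear_combination -hq
    rcases mul_eq_zero.mp this with h | h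
    · have : m' = k := by linarith
      rwa [this]
    · have : m' = -l' - k := by linarith
      rw [this]; exact hk.third hA
  have hp : (l' ^ 2 - l ^ 2) * ((l' ^ 2 - m ^ 2) * (l' ^ 2 - (l + m) ^ 2)) = 0 := by
    have e3 : l ^ 2 + l * m + m ^ 2 = l' ^ 2 + l' * m' + m' ^ 2 := by linarith
    have : l' ^ 6 - 2 * (l ^ 2 + l * m + m ^ 2) * l' ^ 4 + (l ^ 2 + l * m + m ^ 2) ^ 2 * l' ^ 2
        - (l * m * (l + m)) ^ 2 = 0 := by
      rw [e2, e3]; ring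
    rw [← this]; ring
  have sgn : ∀ p q, Fr A p q → p ^ 2 + p * q + q ^ 2 = l' ^ 2 + l' * m' + m' ^ 2 →
      l' ^ 2 - p ^ 2 = 0 → Fr A l' m' := by
    intro p q hpq he hl
    have : (l' - p) * (l' + p) = 0 := by linear_combination hl
    rcases mul_eq_zero.mp this with h | h
    · have : p = l' := by linarith
      subst this
      exact fin q hpq (by linarith)
    · have : p = -l' := by linarith
      subst this
      have := hpq.neg
      rw [neg_neg] at this
      exact fin (-q) this (by linarith)
  rcases mul_eq_zero.mp hp with h1 | h1
  · exact sgn l m h (by linarith) h1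
  rcases mul_eq_zero.mp h1 with h1 | h1
  · exact sgn m l h.swap (by linarith) h1
  · exact sgn (-l - m) l (h.third hA).swap (by linarith) (by rw [← h1]; ring)

/-- two elements `α, β` of `Λ²₁₄` are conjugate under the stabilizer of `φ`
iff `|α|² = |β|²` and `|α∧α∧α|² = |β∧β∧β|²`. -/
theorem Lambda2_14_conjugacy (α β : AlternatingMap ℝ (Fin 7 → ℝ) ℝ (Fin 2))
    (hα : ∀ i : Fin 7, ∑ j : Fin 7, ∑ k : Fin 7, eps i j k * α ![e j, e k] = 0)
    (hβ : ∀ i : Fin 7, ∑ j : Fin 7, ∑ k : Fin 7, eps i j k * β ![e j, e k] = 0) :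
    (∃ g : GL (Fin 7) ℝ,
      (∀ x y z : Fin 7 → ℝ,
        phi ((g : Matrix (Fin 7) (Fin 7) ℝ).mulVec x)
            ((g : Matrix (Fin 7) (Fin 7) ℝ).mulVec y)
            ((g : Matrix (Fin 7) (Fin 7) ℝ).mulVec z) = phi x y z) ∧
      (∀ x y : Fin 7 → ℝ,
        α ![(g : Matrix (Fin 7) (Fin 7) ℝ).mulVec x,
            (g : Matrix (Fin 7) (Fin 7) ℝ).mulVec y] = β ![x, y])) ↔
    (normSq2 α = normSq2 β ∧ normSqCube α = normSqCube β) := by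
  have hA := Am_g2 α hα
  have hB := Am_g2 β hβ
  obtain ⟨l, m, fA⟩ := hA.fr
  obtain ⟨ga, nA⟩ := fA.nf hA
  constructor
  · rintro ⟨g, hg1, hg2⟩
    set M : Matrix (Fin 7) (Fin 7) ℝ := (g : Matrix (Fin 7) (Fin 7) ℝ) with hM
    have hd : M.det ≠ 0 := ((Matrix.isUnit_iff_isUnit_det _).mp g.isUnit).ne_zero
    have ho := phi_orth M hd hg1
    have ho2 : M * Mᵀ = 1 := mul_eq_one_comm.mp ho
    have nB : NF (Am β) (-l) (-m) (l + m) (Mᵀ * ga) := by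
      refine ⟨?_, ?_, ?_⟩
      · rw [Matrix.transpose_mul, Matrix.transpose_transpose, Matrix.mul_assoc,
          ← Matrix.mul_assoc M, ho2, Matrix.one_mul, nA.1]
      · intro x y z
        simp only [← Matrix.mulVec_mulVec]
        rw [phi_inv ho2 hg1, nA.2.1]
      · intro x y
        rw [← Am_eq, ← hg2, ← nA.2.2, ← Am_eq]
        simp only [Matrix.mulVec_mulVec, ← Matrix.mul_assoc, ho2, Matrix.one_mul]
    rw [nf_norm2 nA, nf_norm2 nB, nf_cube nA, nf_cube nB]
    exact ⟨rfl, rfl⟩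
  · rintro ⟨h1, h2⟩
    obtain ⟨l', m', fB⟩ := hB.fr
    obtain ⟨gb, nB⟩ := fB.nf hB
    rw [nf_norm2 nA, nf_norm2 nB] at h1
    rw [nf_cube nA, nf_cube nB] at h2
    have fA' : Fr (Am α) l' m' := Fr.match hA hB fA fB (by linarith) (by linarith)
    obtain ⟨ga', nA'⟩ := fA'.nf hA
    have b2 : gb * gbᵀ = 1 := mul_eq_one_comm.mp nB.1
    have a2 : ga' * ga'ᵀ = 1 := mul_eq_one_comm.mp nA'.1
    have k1 : (ga' * gbᵀ) * (gb * ga'ᵀ) = 1 := by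
      rw [Matrix.mul_assoc, ← Matrix.mul_assoc gbᵀ, nB.1, Matrix.one_mul, a2]
    refine ⟨⟨ga' * gbᵀ, gb * ga'ᵀ, k1, mul_eq_one_comm.mp k1⟩, ?_, ?_⟩
    · intro x y z
      simp only [← Matrix.mulVec_mulVec]
      rw [nA'.2.1, phi_inv b2 nB.2.1]
    · intro x y
      simp only [← Matrix.mulVec_mulVec]
      rw [Am_eq, nA'.2.2, ← nB.2.2, ← Am_eq]
      simp only [Matrix.mulVec_mulVec, b2, Matrix.one_mulVec]

end G2

end
end
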